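/- For any ψ > ψ↓(κ), the system of equations in (c₁,c₂,s): −c₁ = E_μ[A·W²·X^{1/2}/D], c₁² + c₂² = E_μ[(ψ·X + A²·W²·X)/D²], 1 = E_μ[(ψ + A²·W²)/D²] — where A = ∂₁F_κ(c₁,c₂) − c₁c₂^{−1}∂₂F_κ(c₁,c₂), D = c₂^{−1}∂₂F_κ(c₁,c₂)·X^{1/2} + ψ^{1/2}·s·X^{−1/2}, and (X,W) ~ μ — has a unique solution (c₁(ψ,κ), c₂(ψ,κ), s(ψ,κ)) ∈ ℝ × (0,∞) × (0,∞). Moreover, the functions T, c₁, c₂, s are continuous on the domain {(ψ,κ) : κ > 0, ψ > ψ↓(κ)}, where T(ψ,κ) = ψ^{−1/2}·(F_κ(c₁,c₂) − c₁·∂₁F_κ(c₁,c₂) − c₂·∂₂F_κ(c₁,c₂)) − s evaluated at the unique solution. -/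

import Mathlib

open MeasureTheory ProbabilityTheory Real Filter Set Topology

noncomputable section

namespace MaxMargin

/-- The standard Gaussian measure on `ℝ`. -/
def stdG : Measure ℝ := gaussianReal 0 1

/-- The function `F_κ(c₁,c₂) = (E[((κ − c₁·Y·G − c₂·Z)₊)²])^{1/2}` where `G, Z` are independent
standard Gaussians and, conditionally on `G`, `Y ∈ {+1,−1}` with `P(Y = +1 | G) = f(G)`. -/
def Fk (f : ℝ → ℝ) (κ c₁ c₂ : ℝ) : ℝ :=
  Real.sqrt (∫ g, ∫ z,
    (f g * (max (κ - c₁ * g - c₂ * z) 0) ^ 2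
      + (1 - f g) * (max (κ + c₁ * g - c₂ * z) 0) ^ 2) ∂stdG ∂stdG)

/-- Non-degeneracy of `f`: the variable `T = Y·G` satisfies `P(T < x) > 0` and `P(T > x) > 0`
for every `x ∈ ℝ`. -/
def NonDeg (f : ℝ → ℝ) : Prop :=
  ∀ x : ℝ,
    (0 < ∫ g, (f g * (if g < x then (1:ℝ) else 0)
          + (1 - f g) * (if -g < x then (1:ℝ) else 0)) ∂stdG) ∧
    (0 < ∫ g, (f g * (if x < g then (1:ℝ) else 0)
          + (1 - f g) * (if x < -g then (1:ℝ) else 0)) ∂stdG)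


/-- Points of `ℝ³` carrying the coordinates `(G, X, W)`. -/
abbrev Pt : Type := ℝ × ℝ × ℝ

/-- First coordinate `G`. -/
def Gc : Pt → ℝ := fun q => q.1

/-- Second coordinate `X`. -/
def Xc : Pt → ℝ := fun q => q.2.1

/-- Third coordinate `W`. -/
def Wc : Pt → ℝ := fun q => q.2.2

/-- The inner product `⟨h₁,h₂⟩_P = E_P[h₁h₂]`. -/
def ip (P : Measure Pt) (h₁ h₂ : Pt → ℝ) : ℝ := ∫ q, h₁ q * h₂ q ∂P

/-- The norm `‖h‖_P = ⟨h,h⟩_P^{1/2}`. -/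
def pnorm (P : Measure Pt) (h : Pt → ℝ) : ℝ := Real.sqrt (ip P h h)

/-- Projection onto the orthogonal complement of `W`: `Π_{W⊥}(h) = h − ⟨h,W⟩_P·W`. -/
def projW (P : Measure Pt) (h : Pt → ℝ) : Pt → ℝ := fun q => h q - ip P h Wc * Wc q

/-- Partial derivative of `F_κ` in its first argument. -/
def d1F (f : ℝ → ℝ) (κ c₁ c₂ : ℝ) : ℝ := deriv (fun t => Fk f κ t c₂) c₁

/-- Partial derivative of `F_κ` in its second argument. -/
def d2F (f : ℝ → ℝ) (κ c₁ c₂ : ℝ) : ℝ := deriv (fun t => Fk f κ c₁ t) c₂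

/-- `ψ*(0) = min_{c ∈ ℝ} F₀(c,1)²`. -/
def psiStar0 (f : ℝ → ℝ) : ℝ := ⨅ c : ℝ, (Fk f 0 c 1) ^ 2

/-- The functional `𝓡_{ψ,κ,P}(h) = ψ^{−1/2}·F_κ(⟨h, X^{1/2}W⟩_P, ‖Π_{W⊥}(X^{1/2}h)‖_P)
+ ⟨h, X^{1/2}·Π_{W⊥}(G)⟩_P`. -/
def Rfun (f : ℝ → ℝ) (P : Measure Pt) (ψ κ : ℝ) (h : Pt → ℝ) : ℝ :=
  (Real.sqrt ψ)⁻¹ *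
      Fk f κ (ip P h (fun q => Real.sqrt (Xc q) * Wc q))
        (pnorm P (projW P (fun q => Real.sqrt (Xc q) * h q)))
    + ip P h (fun q => Real.sqrt (Xc q) * projW P Gc q)

/-- `ζ(P) = ‖X^{−1/2}W‖_P^{−1}`. -/
def zetaP (P : Measure Pt) : ℝ := (pnorm P (fun q => (Real.sqrt (Xc q))⁻¹ * Wc q))⁻¹

/-- `ζ = (E_μ[X⁻¹W²])^{−1/2}` for `(X,W) ~ μ`. -/
def zetaMu (μ : Measure (ℝ × ℝ)) : ℝ := (Real.sqrt (∫ q, (q.1)⁻¹ * q.2 ^ 2 ∂μ))⁻¹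

/-- `ω = (E_μ[(1 − ζ²X⁻¹)²W²])^{1/2}`. -/
def omegaMu (μ : Measure (ℝ × ℝ)) : ℝ :=
  Real.sqrt (∫ q, (1 - (zetaMu μ) ^ 2 * (q.1)⁻¹) ^ 2 * q.2 ^ 2 ∂μ)

/-- `ψ₊(κ)`. -/
def psiPlus (f : ℝ → ℝ) (μ : Measure (ℝ × ℝ)) (κ : ℝ) : ℝ :=
  if 0 < d1F f κ (zetaMu μ) 0 then 0
  else (d2F f κ (zetaMu μ) 0) ^ 2 - (omegaMu μ) ^ 2 * (d1F f κ (zetaMu μ) 0) ^ 2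

/-- `ψ₋(κ)`. -/
def psiMinus (f : ℝ → ℝ) (μ : Measure (ℝ × ℝ)) (κ : ℝ) : ℝ :=
  if 0 < d1F f κ (-(zetaMu μ)) 0 then 0
  else (d2F f κ (-(zetaMu μ)) 0) ^ 2 - (omegaMu μ) ^ 2 * (d1F f κ (-(zetaMu μ)) 0) ^ 2

/-- `ψ↓(κ) = max{ψ*(0), ψ₊(κ), ψ₋(κ)}`. -/
def psiDown (f : ℝ → ℝ) (μ : Measure (ℝ × ℝ)) (κ : ℝ) : ℝ :=
  max (max (psiStar0 f) (psiPlus f μ κ)) (psiMinus f μ κ)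

/-- The system of equations with expectations over `(X,W) ~ μ`:
with `A = ∂₁F_κ(c₁,c₂) − c₁c₂⁻¹∂₂F_κ(c₁,c₂)` and
`D = c₂⁻¹∂₂F_κ(c₁,c₂)·X^{1/2} + ψ^{1/2}·s·X^{−1/2}`,
`−c₁ = E_μ[A·W²·X^{1/2}/D]`, `c₁² + c₂² = E_μ[(ψX + A²W²X)/D²]`, `1 = E_μ[(ψ + A²W²)/D²]`. -/
def SolSysMu (f : ℝ → ℝ) (μ : Measure (ℝ × ℝ)) (ψ κ c₁ c₂ s : ℝ) : Prop :=
  (-c₁ = ∫ q, (d1F f κ c₁ c₂ - c₁ * c₂⁻¹ * d2F f κ c₁ c₂) * q.2 ^ 2 * Real.sqrt q.1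
      / (c₂⁻¹ * d2F f κ c₁ c₂ * Real.sqrt q.1 + Real.sqrt ψ * s * (Real.sqrt q.1)⁻¹) ∂μ)
  ∧ (c₁ ^ 2 + c₂ ^ 2 = ∫ q,
      (ψ * q.1 + (d1F f κ c₁ c₂ - c₁ * c₂⁻¹ * d2F f κ c₁ c₂) ^ 2 * q.2 ^ 2 * q.1)
      / (c₂⁻¹ * d2F f κ c₁ c₂ * Real.sqrt q.1 + Real.sqrt ψ * s * (Real.sqrt q.1)⁻¹) ^ 2 ∂μ)
  ∧ (1 = ∫ q,
      (ψ + (d1F f κ c₁ c₂ - c₁ * c₂⁻¹ * d2F f κ c₁ c₂) ^ 2 * q.2 ^ 2)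
      / (c₂⁻¹ * d2F f κ c₁ c₂ * Real.sqrt q.1 + Real.sqrt ψ * s * (Real.sqrt q.1)⁻¹) ^ 2 ∂μ)

/-- `T(ψ,κ) = ψ^{−1/2}(F_κ(c₁,c₂) − c₁∂₁F_κ(c₁,c₂) − c₂∂₂F_κ(c₁,c₂)) − s`. -/
def Tval (f : ℝ → ℝ) (ψ κ c₁ c₂ s : ℝ) : ℝ :=
  (Real.sqrt ψ)⁻¹ * (Fk f κ c₁ c₂ - c₁ * d1F f κ c₁ c₂ - c₂ * d2F f κ c₁ c₂) - s

/-!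
The system is the list of Karush-Kuhn-Tucker conditions for minimising the convex functional
`J h = F_κ(⟪S h, w⟫, ‖S h - ⟪S h, w⟫ w‖) + √ψ ⟪S h, g⟫` over the unit ball of `L²(μ; ℝ²)`. Here
`S` is multiplication by `X^{1/2}`, the unit vectors `w = (W, 0)` and `g = (0, 1)` carry the signal
and the noise, `(c₁, c₂)` are the two arguments of `F_κ` at the minimiser, and `√ψ s` is the
Lagrange multiplier of the constraint.

A minimiser exists by weak compactness. Its multiplier does not vanish: otherwise the gradient of
`F_κ` at `(c₁, c₂)` would be `(0, √ψ)`, and by convexity `F_κ` would grow at rate at least `√ψ`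
along every ray `t ↦ (t c, t)`, although its rate there is `F₀(c, 1)`, which is below `√ψ` for some
`c`. Two solutions with positive multipliers are minimisers of norm one; convexity of `J` and
rotundity of the ball make them equal. Solutions stay bounded when `(ψ, κ)` converges, and a limit
of solutions is a solution by the same two arguments, so uniqueness gives continuity.
-/

open scoped RealInnerProductSpace

section ConvexMinimisation

variable {H K : Type*} [NormedAddCommGroup H] [InnerProductSpace ℝ H]
  [NormedAddCommGroup K] [InnerProductSpace ℝ K] {J : H → ℝ} {N : H → H}

/-- `N` selects a subgradient of `J` at every point of the space; this is the form in which
convexity of `J` is used. -/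
def IsSubgradientSelection (J : H → ℝ) (N : H → H) : Prop :=
  ∀ h k, J h + ⟪N h, k - h⟫ ≤ J k

namespace IsSubgradientSelection

lemma isLittleO_of_continuousAt (hJ : IsSubgradientSelection J N) {h : H}
    (hN : ContinuousAt N h) :
    (fun k => J k - J h - ⟪N h, k - h⟫) =o[𝓝 h] fun k => k - h := by
  refine Asymptotics.isLittleO_iff.mpr fun c hc => ?_
  filter_upwards [Metric.continuousAt_iff'.mp hN c hc] with k hk
  rw [dist_eq_norm] at hk
  have lower : 0 ≤ J k - J h - ⟪N h, k - h⟫ := by linarith [hJ h k]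
  have upper : J k - J h - ⟪N h, k - h⟫ ≤ ⟪N k - N h, k - h⟫ := by
    have := hJ k h
    rw [← neg_sub k h, inner_neg_right] at this
    rw [inner_sub_left]
    linarith
  calc ‖J k - J h - ⟪N h, k - h⟫‖ = J k - J h - ⟪N h, k - h⟫ := Real.norm_of_nonneg lower
    _ ≤ ‖N k - N h‖ * ‖k - h‖ := upper.trans (real_inner_le_norm _ _)
    _ ≤ c * ‖k - h‖ := by gcongr

lemma hasGradientAt [CompleteSpace H] (hJ : IsSubgradientSelection J N) {h : H}
    (hN : ContinuousAt N h) : HasGradientAt J (N h) h :=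
  hasGradientAt_iff_isLittleO.mpr (hJ.isLittleO_of_continuousAt hN)

lemma hasDerivAt {φ φ' : ℝ → ℝ} (hφ : IsSubgradientSelection φ φ') {x : ℝ}
    (hφ' : ContinuousAt φ' x) : HasDerivAt φ (φ' x) x := by
  simpa using (hφ.hasGradientAt hφ').hasDerivAt

lemma comp_clm [CompleteSpace H] [CompleteSpace K] {J : K → ℝ} {N : K → K}
    (hJ : IsSubgradientSelection J N) (S : H →L[ℝ] K) :
    IsSubgradientSelection (fun h => J (S h)) (fun h => S.adjoint (N (S h))) := by
  intro h k
  simpa only [ContinuousLinearMap.adjoint_inner_left, map_sub] using hJ (S h) (S k)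

lemma lowerSemicontinuous_weakDual [CompleteSpace H] (hJ : IsSubgradientSelection J N) :
    LowerSemicontinuous fun φ : WeakDual ℝ H =>
      J ((InnerProductSpace.toDual ℝ H).symm (WeakDual.toStrongDual φ)) := by
  intro φ y hy
  set k := (InnerProductSpace.toDual ℝ H).symm (WeakDual.toStrongDual φ) with hk
  have apply_eq (χ : WeakDual ℝ H) (v : H) :
      ⟪(InnerProductSpace.toDual ℝ H).symm (WeakDual.toStrongDual χ), v⟫ = χ v :=
    InnerProductSpace.toDual_symm_apply
  have affine : Tendsto (fun χ : WeakDual ℝ H => J k + (χ (N k) - ⟪k, N k⟫)) (𝓝 φ) (𝓝 (J k)) := by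
    have := (((WeakDual.eval_continuous (N k)).tendsto φ).sub_const ⟪k, N k⟫).const_add (J k)
    rwa [← apply_eq φ, ← hk, sub_self, add_zero] at this
  filter_upwards [affine.eventually_const_lt hy] with χ hχ
  refine hχ.trans_le ?_
  have := hJ k ((InnerProductSpace.toDual ℝ H).symm (WeakDual.toStrongDual χ))
  rwa [inner_sub_right, real_inner_comm _ (N k), real_inner_comm k, apply_eq] at this

lemma exists_isMinOn_closedBall [CompleteSpace H] (hJ : IsSubgradientSelection J N) :
    ∃ k ∈ Metric.closedBall (0 : H) 1, IsMinOn J (Metric.closedBall 0 1) k := by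
  obtain ⟨φ, hφ, hmin⟩ :=
    (hJ.lowerSemicontinuous_weakDual.lowerSemicontinuousOn _).exists_isMinOn ⟨0, by simp⟩
      (WeakDual.isCompact_closedBall (𝕜 := ℝ) (E := H) 0 1)
  refine ⟨(InnerProductSpace.toDual ℝ H).symm (WeakDual.toStrongDual φ), by simpa using hφ,
    fun h hh => ?_⟩
  have := hmin (a := StrongDual.toWeakDual (InnerProductSpace.toDual ℝ H h)) (by simpa using hh)
  simpa using this

lemma inner_nonneg_of_isMinOn_closedBall [CompleteSpace H] (hJ : IsSubgradientSelection J N)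
    {k v : H} (hN : ContinuousAt N k) (hk : k ∈ Metric.closedBall (0 : H) 1)
    (hmin : IsMinOn J (Metric.closedBall 0 1) k) (hv : v ∈ Metric.closedBall (0 : H) 1) :
    0 ≤ ⟪N k, v - k⟫ := by
  simpa using hmin.localize.hasFDerivWithinAt_nonneg
    (hJ.hasGradientAt hN).hasFDerivAt.hasFDerivWithinAt
    (sub_mem_posTangentConeAt_of_segment_subset
      ((convex_closedBall (0 : H) 1).segment_subset hk hv))

lemma exists_kkt_closedBall [CompleteSpace H] (hJ : IsSubgradientSelection J N)
    (hN : Continuous N) :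
    ∃ (k : H) (σ : ℝ), 0 ≤ σ ∧ N k = -(σ • k) ∧ (σ = 0 ∨ ‖k‖ = 1) := by
  obtain ⟨k, hk, hmin⟩ := hJ.exists_isMinOn_closedBall
  refine ⟨k, ‖N k‖, norm_nonneg _, ?_⟩
  rcases eq_or_ne (N k) 0 with h0 | h0
  · simp [h0]
  have hk1 : ‖k‖ ≤ 1 := by simpa using hk
  have steepest : ⟪N k, k⟫ ≤ -‖N k‖ := by
    have unit_mem : -(‖N k‖⁻¹ • N k) ∈ Metric.closedBall (0 : H) 1 := by
      simp [norm_smul, h0]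
    have := hJ.inner_nonneg_of_isMinOn_closedBall hN.continuousAt hk hmin unit_mem
    rw [inner_sub_right, inner_neg_right, inner_smul_right, real_inner_self_eq_norm_sq, sq,
      inv_mul_cancel_left₀ (norm_ne_zero_iff.mpr h0)] at this
    linarith
  have hk_norm : ‖k‖ = 1 := by
    refine hk1.antisymm (le_of_mul_le_mul_left ?_ (norm_pos_iff.mpr h0))
    linarith [(abs_le.mp (abs_real_inner_le_norm (N k) k)).1]
  have hsq : ‖N k + ‖N k‖ • k‖ ^ 2 ≤ 0 := by
    rw [norm_add_sq_real, inner_smul_right, norm_smul, norm_norm, hk_norm]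
    nlinarith [norm_nonneg (N k)]
  have hsum : N k + ‖N k‖ • k = 0 :=
    norm_eq_zero.mp (pow_eq_zero_iff two_ne_zero |>.mp (hsq.antisymm (sq_nonneg _)))
  exact ⟨eq_neg_of_add_eq_zero_left hsum, Or.inr hk_norm⟩

lemma kkt_unique (hJ : IsSubgradientSelection J N) {h k : H} {σ τ : ℝ} (hσ : 0 < σ)
    (hτ : 0 < τ) (hh : N h = -(σ • h)) (hk : N k = -(τ • k)) (h1 : ‖h‖ = 1) (k1 : ‖k‖ = 1) :
    h = k := by
  have from_h := hJ h k
  have from_k := hJ k h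
  rw [hh, inner_neg_left, real_inner_smul_left, inner_sub_right, real_inner_self_eq_norm_sq,
    h1] at from_h
  rw [hk, inner_neg_left, real_inner_smul_left, inner_sub_right, real_inner_self_eq_norm_sq,
    k1, real_inner_comm] at from_k
  have le_one : ⟪h, k⟫ ≤ 1 := by simpa [h1, k1] using real_inner_le_norm h k
  have one_le : 1 ≤ ⟪h, k⟫ := by
    by_contra! hlt
    nlinarith
  exact (inner_eq_one_iff_of_norm_eq_one h1 k1).mp (le_one.antisymm one_le)

end IsSubgradientSelection

end ConvexMinimisation

section CylindricalFunctional

variable {H : Type*} [NormedAddCommGroup H] [InnerProductSpace ℝ H]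

/-- The component `x - ⟪x, w⟫ w` of `x` orthogonal to the unit vector `w`. -/
def perp (w x : H) : H := x - ⟪x, w⟫ • w

@[fun_prop]
lemma continuous_perp (w : H) : Continuous (perp w) := by
  unfold perp
  fun_prop

lemma inner_perp_left {w : H} (hw : ‖w‖ = 1) (x : H) : ⟪perp w x, w⟫ = 0 := by
  simp [perp, inner_sub_left, inner_smul_left, hw]

lemma inner_perp_eq_inner_perp_perp {w : H} (hw : ‖w‖ = 1) (x y : H) :
    ⟪perp w x, y⟫ = ⟪perp w x, perp w y⟫ := by
  conv_rhs => rw [perp.eq_def w y, inner_sub_right, inner_smul_right, inner_perp_left hw,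
    mul_zero, sub_zero]

lemma inner_sq_add_norm_perp_sq {w : H} (hw : ‖w‖ = 1) (x : H) :
    ⟪x, w⟫ ^ 2 + ‖perp w x‖ ^ 2 = ‖x‖ ^ 2 := by
  rw [perp, norm_sub_sq_real, inner_smul_right, norm_smul, hw, Real.norm_eq_abs, mul_one, sq_abs]
  ring

/-- `(F₁, F₂)` selects a subgradient of the function `F` of two real variables. -/
def IsSubgradientPair (F F₁ F₂ : ℝ → ℝ → ℝ) : Prop :=
  ∀ a b a' b', F a b + F₁ a b * (a' - a) + F₂ a b * (b' - b) ≤ F a' b'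

/-- The functional `x ↦ F(⟪x, w⟫, ‖x - ⟪x, w⟫ w‖) + ⟪x, v⟫`. -/
def cylFunctional (F : ℝ → ℝ → ℝ) (w v x : H) : ℝ := F ⟪x, w⟫ ‖perp w x‖ + ⟪x, v⟫

/-- The gradient of `cylFunctional F w v` when `(F₁, F₂)` is the gradient of `F`; the middle term
is `0` where `perp w x = 0`. -/
def cylGradient (F₁ F₂ : ℝ → ℝ → ℝ) (w v x : H) : H :=
  F₁ ⟪x, w⟫ ‖perp w x‖ • w + (‖perp w x‖⁻¹ * F₂ ⟪x, w⟫ ‖perp w x‖) • perp w x + v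

variable {F F₁ F₂ : ℝ → ℝ → ℝ} {w : H}

lemma radial_slope_le {p q : H} {m : ℝ} (hm : 0 ≤ m) (hp : p = 0 → m = 0) :
    ‖p‖⁻¹ * m * (⟪p, q⟫ - ‖p‖ ^ 2) ≤ m * (‖q‖ - ‖p‖) := by
  rcases eq_or_ne p 0 with rfl | hp0
  · simp [hp rfl]
  calc ‖p‖⁻¹ * m * (⟪p, q⟫ - ‖p‖ ^ 2) ≤ ‖p‖⁻¹ * m * (‖p‖ * ‖q‖ - ‖p‖ ^ 2) := by
        gcongr
        exact real_inner_le_norm p q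
    _ = m * (‖q‖ - ‖p‖) := by field_simp

lemma IsSubgradientPair.isSubgradientSelection_cylFunctional (hF : IsSubgradientPair F F₁ F₂)
    (hF₂ : ∀ a, F₂ a 0 = 0) (hF₂_nonneg : ∀ a b, 0 ≤ b → 0 ≤ F₂ a b) (hw : ‖w‖ = 1) (v : H) :
    IsSubgradientSelection (cylFunctional F w v) (cylGradient F₁ F₂ w v) := by
  intro x y
  have radial := radial_slope_le (p := perp w x) (q := perp w y)
    (hF₂_nonneg ⟪x, w⟫ _ (norm_nonneg (perp w x))) (fun h => by rw [h, norm_zero, hF₂])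
  have inner_w : ⟪w, y - x⟫ = ⟪y, w⟫ - ⟪x, w⟫ := by rw [real_inner_comm, inner_sub_left]
  have inner_v : ⟪v, y - x⟫ = ⟪y, v⟫ - ⟪x, v⟫ := by rw [real_inner_comm, inner_sub_left]
  have inner_p : ⟪perp w x, y - x⟫ = ⟪perp w x, perp w y⟫ - ‖perp w x‖ ^ 2 := by
    rw [inner_sub_right, inner_perp_eq_inner_perp_perp hw x y,
      inner_perp_eq_inner_perp_perp hw x x, real_inner_self_eq_norm_sq]
  have slope := hF ⟪x, w⟫ ‖perp w x‖ ⟪y, w⟫ ‖perp w y‖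
  simp only [cylFunctional, cylGradient, inner_add_left, real_inner_smul_left, inner_w, inner_v,
    inner_p]
  linarith

lemma continuous_radial_smul (hF₂c : Continuous fun q : ℝ × ℝ => F₂ q.1 q.2)
    (hF₂ : ∀ a, F₂ a 0 = 0) :
    Continuous fun x : H => (‖perp w x‖⁻¹ * F₂ ⟪x, w⟫ ‖perp w x‖) • perp w x := by
  have slope : Continuous fun x : H => F₂ ⟪x, w⟫ ‖perp w x‖ :=
    hF₂c.comp (f := fun x : H => (⟪x, w⟫, ‖perp w x‖)) (by fun_prop)
  refine continuous_iff_continuousAt.mpr fun x => ?_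
  rcases eq_or_ne (perp w x) 0 with hx | hx
  · have bound : Tendsto (fun y => ‖F₂ ⟪y, w⟫ ‖perp w y‖‖) (𝓝 x) (𝓝 0) := by
      simpa [hx, hF₂] using (slope.tendsto x).norm
    rw [ContinuousAt, hx, smul_zero]
    refine squeeze_zero_norm (fun y => ?_) bound
    rw [norm_smul, norm_mul, norm_inv, norm_norm, mul_right_comm]
    exact mul_le_of_le_one_left (norm_nonneg _) (inv_mul_le_one)
  · exact (((continuous_perp w).norm.continuousAt.inv₀ (norm_ne_zero_iff.mpr hx)).mul
      slope.continuousAt).smul (continuous_perp w).continuousAt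

lemma continuous_cylGradient (hF₁c : Continuous fun q : ℝ × ℝ => F₁ q.1 q.2)
    (hF₂c : Continuous fun q : ℝ × ℝ => F₂ q.1 q.2) (hF₂ : ∀ a, F₂ a 0 = 0) (v : H) :
    Continuous (cylGradient F₁ F₂ w v) := by
  have slope : Continuous fun x : H => F₁ ⟪x, w⟫ ‖perp w x‖ :=
    hF₁c.comp (f := fun x : H => (⟪x, w⟫, ‖perp w x‖)) (by fun_prop)
  exact ((slope.smul continuous_const).add (continuous_radial_smul hF₂c hF₂)).add continuous_const

end CylindricalFunctional

section PositivePart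

variable {α : Type*} [MeasurableSpace α] {ν : Measure α}

lemma inner_posPart_le_inner_posPart_posPart (x y : Lp ℝ 2 ν) :
    ⟪x, Lp.posPart y⟫ ≤ ⟪Lp.posPart x, Lp.posPart y⟫ := by
  rw [L2.inner_def, L2.inner_def]
  refine integral_mono_ae (L2.integrable_inner _ _) (L2.integrable_inner _ _) ?_
  filter_upwards [Lp.coeFn_posPart x, Lp.coeFn_posPart y] with a hx hy
  simp only [hx, hy, RCLike.inner_apply, conj_trivial]
  gcongr
  exact le_max_left _ _

lemma inner_self_posPart (x : Lp ℝ 2 ν) : ⟪x, Lp.posPart x⟫ = ‖Lp.posPart x‖ ^ 2 := by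
  rw [← real_inner_self_eq_norm_sq, L2.inner_def, L2.inner_def]
  refine integral_congr_ae ?_
  filter_upwards [Lp.coeFn_posPart x] with a hx
  rcases le_total (x a) 0 with h | h <;> simp [hx, h]

lemma inner_posPart_le_norm_mul_norm (x y : Lp ℝ 2 ν) :
    ⟪y, Lp.posPart x⟫ ≤ ‖Lp.posPart y‖ * ‖Lp.posPart x‖ :=
  (inner_posPart_le_inner_posPart_posPart y x).trans (real_inner_le_norm _ _)

lemma norm_posPart_sub_posPart_le (x y : Lp ℝ 2 ν) :
    ‖Lp.posPart x - Lp.posPart y‖ ≤ ‖x - y‖ := by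
  have := Lp.lipschitzWith_pos_part.norm_compLp_sub_le (max_eq_right le_rfl) x y
  rwa [NNReal.coe_one, one_mul] at this

lemma posPart_smul_of_nonneg {r : ℝ} (hr : 0 ≤ r) (x : Lp ℝ 2 ν) :
    Lp.posPart (r • x) = r • Lp.posPart x := by
  refine Lp.ext ?_
  filter_upwards [Lp.coeFn_posPart (r • x), Lp.coeFn_posPart x, Lp.coeFn_smul r x,
    Lp.coeFn_smul r (Lp.posPart x)] with a h₁ h₂ h₃ h₄
  simp [h₁, h₂, h₃, h₄, mul_max_of_nonneg _ _ hr]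

lemma norm_posPart_add_le (x y : Lp ℝ 2 ν) :
    ‖Lp.posPart (x + y)‖ ≤ ‖Lp.posPart x‖ + ‖Lp.posPart y‖ := by
  rcases (norm_nonneg (Lp.posPart (x + y))).eq_or_lt with h | h
  · rw [← h]
    positivity
  refine le_of_mul_le_mul_right ?_ h
  calc ‖Lp.posPart (x + y)‖ * ‖Lp.posPart (x + y)‖ = ⟪x + y, Lp.posPart (x + y)⟫ := by
        rw [inner_self_posPart, sq]
    _ ≤ (‖Lp.posPart x‖ + ‖Lp.posPart y‖) * ‖Lp.posPart (x + y)‖ := by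
        rw [inner_add_left, add_mul]
        exact add_le_add (inner_posPart_le_norm_mul_norm _ _) (inner_posPart_le_norm_mul_norm _ _)

/-- The gradient `x⁺ / ‖x⁺‖` of the functional `x ↦ ‖x⁺‖` on `L²`; it is `0` where `x⁺ = 0`. -/
def posPartDirection (x : Lp ℝ 2 ν) : Lp ℝ 2 ν := ‖Lp.posPart x‖⁻¹ • Lp.posPart x

lemma continuousAt_posPartDirection {x : Lp ℝ 2 ν} (hx : Lp.posPart x ≠ 0) :
    ContinuousAt posPartDirection x :=
  (Lp.continuous_posPart.continuousAt.norm.inv₀ (norm_ne_zero_iff.mpr hx)).smul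
    Lp.continuous_posPart.continuousAt

lemma isSubgradientSelection_norm_posPart :
    IsSubgradientSelection (fun x : Lp ℝ 2 ν => ‖Lp.posPart x‖) posPartDirection := by
  intro x y
  rcases eq_or_ne (Lp.posPart x) 0 with hx | hx
  · simp [posPartDirection, hx]
  have hpos : 0 < ‖Lp.posPart x‖ := norm_pos_iff.mpr hx
  have inner_le : ⟪Lp.posPart x, y - x⟫ ≤ ‖Lp.posPart x‖ * (‖Lp.posPart y‖ - ‖Lp.posPart x‖) := by
    rw [inner_sub_right, real_inner_comm, real_inner_comm x, inner_self_posPart]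
    linarith [inner_posPart_le_norm_mul_norm x y]
  rw [posPartDirection, real_inner_smul_left]
  have := (inv_mul_le_iff₀ hpos).mpr inner_le
  linarith

end PositivePart

section AffineFamily

lemma IsSubgradientPair.hasDerivAt_fst {F F₁ F₂ : ℝ → ℝ → ℝ} (hF : IsSubgradientPair F F₁ F₂)
    {a b : ℝ} (hF₁ : ContinuousAt (fun x => F₁ x b) a) :
    HasDerivAt (fun x => F x b) (F₁ a b) a := by
  have partial_fst : IsSubgradientSelection (fun x => F x b) (fun x => F₁ x b) := by
    intro x y
    simpa [mul_comm] using hF x b y b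
  exact partial_fst.hasDerivAt hF₁

lemma IsSubgradientPair.hasDerivAt_snd {F F₁ F₂ : ℝ → ℝ → ℝ} (hF : IsSubgradientPair F F₁ F₂)
    {a b : ℝ} (hF₂ : ContinuousAt (F₂ a) b) : HasDerivAt (F a) (F₂ a b) b := by
  have partial_snd : IsSubgradientSelection (F a) (F₂ a) := by
    intro x y
    simpa [mul_comm] using hF a x a y
  exact partial_snd.hasDerivAt hF₂

/-- The vector `κ e - c₁ t - c₂ z` at `q = (κ, c₁, c₂)`. -/
def affineVec {E : Type*} [AddCommGroup E] [Module ℝ E] (e t z : E) (q : ℝ × ℝ × ℝ) : E :=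
  q.1 • e - q.2.1 • t - q.2.2 • z

@[fun_prop]
lemma continuous_affineVec {E : Type*} [NormedAddCommGroup E] [NormedSpace ℝ E] (e t z : E) :
    Continuous (affineVec e t z) := by
  unfold affineVec
  fun_prop

variable {α : Type*} [MeasurableSpace α] {ν : Measure α}

/-- `F κ c₁ c₂` is the `L²` norm of the positive part of `κ e - c₁ t - c₂ z`; the model is
`F_κ`, with `e = 1`, `t = Y·G` and `z = Z`. -/
def IsPosPartNorm (F : ℝ → ℝ → ℝ → ℝ) (e t z : Lp ℝ 2 ν) : Prop :=
  ∀ κ c₁ c₂, F κ c₁ c₂ = ‖Lp.posPart (affineVec e t z (κ, c₁, c₂))‖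

namespace IsPosPartNorm

variable {F : ℝ → ℝ → ℝ → ℝ} {e t z : Lp ℝ 2 ν} {κ c₁ c₂ : ℝ}

lemma continuous (hF : IsPosPartNorm F e t z) :
    Continuous fun q : ℝ × ℝ × ℝ => F q.1 q.2.1 q.2.2 := by
  simp only [hF _]
  exact (Lp.continuous_posPart.comp (continuous_affineVec e t z)).norm

lemma isSubgradientPair (hF : IsPosPartNorm F e t z) (κ : ℝ) :
    IsSubgradientPair (F κ)
      (fun c₁ c₂ => -⟪posPartDirection (affineVec e t z (κ, c₁, c₂)), t⟫)
      (fun c₁ c₂ => -⟪posPartDirection (affineVec e t z (κ, c₁, c₂)), z⟫) := by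
  intro a b a' b'
  have increment : affineVec e t z (κ, a', b') - affineVec e t z (κ, a, b)
      = (a - a') • t + (b - b') • z := by
    unfold affineVec
    module
  have := isSubgradientSelection_norm_posPart (affineVec e t z (κ, a, b))
    (affineVec e t z (κ, a', b'))
  rw [increment, inner_add_right, inner_smul_right, inner_smul_right] at this
  rw [hF, hF]
  linarith

lemma continuousAt_inner_direction (hF : IsPosPartNorm F e t z) (hpos : 0 < F κ c₁ c₂)
    (y : Lp ℝ 2 ν) :
    ContinuousAt (fun q => -⟪posPartDirection (affineVec e t z q), y⟫) (κ, c₁, c₂) := by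
  have hne : Lp.posPart (affineVec e t z (κ, c₁, c₂)) ≠ 0 := by
    rwa [← norm_pos_iff, ← hF]
  have direction : ContinuousAt (fun q => posPartDirection (affineVec e t z q)) (κ, c₁, c₂) :=
    (continuousAt_posPartDirection hne).comp (continuous_affineVec e t z).continuousAt
  exact (direction.inner continuousAt_const).neg

lemma hasDerivAt_fst (hF : IsPosPartNorm F e t z) (hpos : 0 < F κ c₁ c₂) :
    HasDerivAt (fun x => F κ x c₂) (-⟪posPartDirection (affineVec e t z (κ, c₁, c₂)), t⟫) c₁ :=
  (hF.isSubgradientPair κ).hasDerivAt_fst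
    ((hF.continuousAt_inner_direction hpos t).comp (f := fun x : ℝ => (κ, x, c₂)) (by fun_prop))

lemma hasDerivAt_snd (hF : IsPosPartNorm F e t z) (hpos : 0 < F κ c₁ c₂) :
    HasDerivAt (F κ c₁) (-⟪posPartDirection (affineVec e t z (κ, c₁, c₂)), z⟫) c₂ :=
  (hF.isSubgradientPair κ).hasDerivAt_snd
    ((hF.continuousAt_inner_direction hpos z).comp (f := fun x : ℝ => (κ, c₁, x)) (by fun_prop))

lemma mul_inner_direction (hF : IsPosPartNorm F e t z) (y : Lp ℝ 2 ν) :
    F κ c₁ c₂ * ⟪posPartDirection (affineVec e t z (κ, c₁, c₂)), y⟫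
      = ⟪Lp.posPart (affineVec e t z (κ, c₁, c₂)), y⟫ := by
  rw [hF, posPartDirection, real_inner_smul_left]
  rcases eq_or_ne (Lp.posPart (affineVec e t z (κ, c₁, c₂))) 0 with h | h
  · simp [h]
  · rw [mul_inv_cancel_left₀ (norm_ne_zero_iff.mpr h)]

lemma mul_abs_inner_direction_le (hF : IsPosPartNorm F e t z)
    (hzero : ⟪posPartDirection (affineVec e t z (κ, c₁, 0)), z⟫ = 0) :
    F κ c₁ c₂ * |⟪posPartDirection (affineVec e t z (κ, c₁, c₂)), z⟫| ≤ |c₂| * ‖z‖ ^ 2 := by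
  have hF_nonneg : 0 ≤ F κ c₁ c₂ := by
    rw [hF]
    exact norm_nonneg _
  have inner_zero : ⟪Lp.posPart (affineVec e t z (κ, c₁, 0)), z⟫ = 0 := by
    rw [← hF.mul_inner_direction, hzero, mul_zero]
  have displacement :
      affineVec e t z (κ, c₁, c₂) - affineVec e t z (κ, c₁, 0) = -(c₂ • z) := by
    unfold affineVec
    module
  calc F κ c₁ c₂ * |⟪posPartDirection (affineVec e t z (κ, c₁, c₂)), z⟫|
      = |⟪Lp.posPart (affineVec e t z (κ, c₁, c₂))
          - Lp.posPart (affineVec e t z (κ, c₁, 0)), z⟫| := by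
        rw [inner_sub_left, inner_zero, sub_zero, ← hF.mul_inner_direction, abs_mul,
          abs_of_nonneg hF_nonneg]
    _ ≤ ‖affineVec e t z (κ, c₁, c₂) - affineVec e t z (κ, c₁, 0)‖ * ‖z‖ :=
        (abs_real_inner_le_norm _ _).trans (by gcongr; exact norm_posPart_sub_posPart_le _ _)
    _ = |c₂| * ‖z‖ ^ 2 := by
        rw [displacement, norm_neg, norm_smul, Real.norm_eq_abs]
        ring

lemma le_add_mul (hF : IsPosPartNorm F e t z) (hκ : 0 ≤ κ) {r : ℝ} (hr : 0 ≤ r) (c : ℝ) :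
    F κ (r * c) r ≤ κ * ‖Lp.posPart e‖ + r * F 0 c 1 := by
  have split : affineVec e t z (κ, r * c, r) = κ • e + r • affineVec e t z (0, c, 1) := by
    unfold affineVec
    module
  calc F κ (r * c) r ≤ ‖Lp.posPart (κ • e)‖ + ‖Lp.posPart (r • affineVec e t z (0, c, 1))‖ := by
        rw [hF, split]
        exact norm_posPart_add_le _ _
    _ = κ * ‖Lp.posPart e‖ + r * F 0 c 1 := by
        rw [posPart_smul_of_nonneg hκ, posPart_smul_of_nonneg hr, norm_smul, norm_smul,
          Real.norm_of_nonneg hκ, Real.norm_of_nonneg hr, hF]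

end IsPosPartNorm
end AffineFamily

section GaussianRepresentation

instance : IsProbabilityMeasure stdG := by
  unfold stdG
  infer_instance

instance : Measure.IsOpenPosMeasure stdG :=
  (gaussianReal_absolutelyContinuous' 0 one_ne_zero).isOpenPosMeasure

lemma measurePreserving_neg_stdG : MeasurePreserving (fun x : ℝ => -x) stdG stdG :=
  ⟨measurable_neg, by simp [stdG, gaussianReal_map_neg]⟩

lemma measurePreserving_neg_fst :
    MeasurePreserving (fun q : ℝ × ℝ => (-q.1, q.2)) (stdG.prod stdG) (stdG.prod stdG) :=
  measurePreserving_neg_stdG.prod (MeasurePreserving.id stdG)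

/-- The joint law of `(Y·G, Z)`, where `G, Z` are independent standard Gaussians and `Y` is a sign
with `P(Y = +1 | G) = f(G)`. -/
def labelNoiseLaw (f : ℝ → ℝ) : Measure (ℝ × ℝ) :=
  (stdG.prod stdG).withDensity (fun q => ENNReal.ofReal (f q.1))
    + ((stdG.prod stdG).withDensity (fun q => ENNReal.ofReal (1 - f q.1))).map
        (fun q => (-q.1, q.2))

variable {f : ℝ → ℝ}

lemma withDensity_ofReal_le {α : Type*} [MeasurableSpace α] (m : Measure α) {u : α → ℝ}
    (hu : ∀ a, u a ≤ 1) : m.withDensity (fun a => ENNReal.ofReal (u a)) ≤ m := by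
  calc m.withDensity (fun a => ENNReal.ofReal (u a)) ≤ m.withDensity 1 :=
        withDensity_mono (ae_of_all _ fun a => ENNReal.ofReal_le_one.mpr (hu a))
    _ = m := withDensity_one

lemma labelNoiseLaw_le (hf01 : ∀ x, f x ∈ Icc (0 : ℝ) 1) :
    labelNoiseLaw f ≤ (2 : ENNReal) • stdG.prod stdG := by
  rw [two_smul]
  refine add_le_add (withDensity_ofReal_le _ fun q => (hf01 q.1).2) ?_
  calc _ ≤ (stdG.prod stdG).map (fun q => (-q.1, q.2)) :=
        Measure.map_mono (withDensity_ofReal_le _ fun q => by linarith [(hf01 q.1).1])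
          measurePreserving_neg_fst.measurable
    _ = stdG.prod stdG := measurePreserving_neg_fst.map_eq

lemma memLp_labelNoiseLaw (hf01 : ∀ x, f x ∈ Icc (0 : ℝ) 1) {φ : ℝ × ℝ → ℝ} {p : ENNReal}
    (hφ : MemLp φ p (stdG.prod stdG)) : MemLp φ p (labelNoiseLaw f) :=
  hφ.of_measure_le_smul ENNReal.ofNat_ne_top (labelNoiseLaw_le hf01)

lemma integral_withDensity_ofReal {α : Type*} [MeasurableSpace α] (m : Measure α) {u : α → ℝ}
    (hu : Measurable u) (hu0 : ∀ a, 0 ≤ u a) (φ : α → ℝ) :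
    ∫ a, φ a ∂m.withDensity (fun a => ENNReal.ofReal (u a)) = ∫ a, u a * φ a ∂m := by
  rw [integral_withDensity_eq_integral_toReal_smul hu.ennreal_ofReal (by simp)]
  simp [ENNReal.toReal_ofReal (hu0 _)]

lemma integrable_unit_mul {α : Type*} [MeasurableSpace α] {m : Measure α} {u φ : α → ℝ}
    (hu : Measurable u) (hu01 : ∀ a, u a ∈ Icc (0 : ℝ) 1) (hφ : Integrable φ m) :
    Integrable (fun a => u a * φ a) m :=
  hφ.bdd_mul hu.aestronglyMeasurable (c := 1) <| ae_of_all _ fun a =>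
    (Real.norm_of_nonneg (hu01 a).1).trans_le (hu01 a).2

/-- The conditional expectation of `φ(Y·G, Z)` given `(G, Z) = q`. -/
def signAverage (f : ℝ → ℝ) (φ : ℝ × ℝ → ℝ) (q : ℝ × ℝ) : ℝ :=
  f q.1 * φ q + (1 - f q.1) * φ (-q.1, q.2)

section

variable (hf : Measurable f) (hf01 : ∀ x, f x ∈ Icc (0 : ℝ) 1) {φ : ℝ × ℝ → ℝ}
  (hφ : Integrable φ (stdG.prod stdG))

include hf hf01 hφ

lemma integrable_mul_fst : Integrable (fun q => f q.1 * φ q) (stdG.prod stdG) :=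
  integrable_unit_mul (hf.comp measurable_fst) (fun q => hf01 q.1) hφ

lemma integrable_one_sub_mul_neg_fst :
    Integrable (fun q => (1 - f q.1) * φ (-q.1, q.2)) (stdG.prod stdG) :=
  integrable_unit_mul (measurable_const.sub (hf.comp measurable_fst))
    (fun q => Icc.mem_iff_one_sub_mem.mp (hf01 q.1))
    ((measurePreserving_neg_fst.integrable_comp hφ.aestronglyMeasurable).mpr hφ)

lemma integrable_signAverage : Integrable (signAverage f φ) (stdG.prod stdG) :=
  (integrable_mul_fst hf hf01 hφ).add (integrable_one_sub_mul_neg_fst hf hf01 hφ)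

lemma integral_labelNoiseLaw (hφm : Measurable φ) :
    ∫ q, φ q ∂labelNoiseLaw f = ∫ q, signAverage f φ q ∂stdG.prod stdG := by
  have hint : Integrable φ (labelNoiseLaw f) :=
    memLp_one_iff_integrable.mp (memLp_labelNoiseLaw hf01 (memLp_one_iff_integrable.mpr hφ))
  rw [labelNoiseLaw, integral_add_measure hint.left_of_add_measure hint.right_of_add_measure,
    integral_map measurePreserving_neg_fst.measurable.aemeasurable hφm.aestronglyMeasurable,
    integral_withDensity_ofReal (u := fun q : ℝ × ℝ => f q.1) _ (hf.comp measurable_fst)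
      fun q => (hf01 q.1).1,
    integral_withDensity_ofReal (u := fun q : ℝ × ℝ => 1 - f q.1) _
      (measurable_const.sub (hf.comp measurable_fst)) fun q => sub_nonneg.mpr (hf01 q.1).2]
  exact (integral_add (integrable_mul_fst hf hf01 hφ)
    (integrable_one_sub_mul_neg_fst hf hf01 hφ)).symm

end

/-- The margin deficit `(κ - c₁ t - c₂ z)₊` as a function of `q = (t, z)`. -/
def hinge (κ c₁ c₂ : ℝ) (q : ℝ × ℝ) : ℝ := max (κ - c₁ * q.1 - c₂ * q.2) 0

lemma continuous_hinge (κ c₁ c₂ : ℝ) : Continuous (hinge κ c₁ c₂) := by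
  unfold hinge
  fun_prop

lemma memLp_fst_stdG : MemLp (fun q : ℝ × ℝ => q.1) 2 (stdG.prod stdG) :=
  (memLp_id_gaussianReal 2).comp_fst stdG

lemma memLp_snd_stdG : MemLp (fun q : ℝ × ℝ => q.2) 2 (stdG.prod stdG) :=
  (memLp_id_gaussianReal 2).comp_snd stdG

lemma memLp_hinge (κ c₁ c₂ : ℝ) : MemLp (hinge κ c₁ c₂) 2 (stdG.prod stdG) :=
  (((memLp_const κ).sub (memLp_fst_stdG.const_mul c₁)).sub (memLp_snd_stdG.const_mul c₂)).pos_part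

lemma Fk_eq_sqrt_integral_signAverage (hf : Measurable f) (hf01 : ∀ x, f x ∈ Icc (0 : ℝ) 1)
    (κ c₁ c₂ : ℝ) :
    Fk f κ c₁ c₂ = √(∫ q, signAverage f (fun p => hinge κ c₁ c₂ p ^ 2) q ∂stdG.prod stdG) := by
  rw [integral_prod _ (integrable_signAverage hf hf01 (memLp_hinge κ c₁ c₂).integrable_sq)]
  simp only [signAverage, hinge, mul_neg, sub_neg_eq_add, Fk]

lemma Fk_neg_right (f : ℝ → ℝ) (κ c₁ c₂ : ℝ) : Fk f κ c₁ (-c₂) = Fk f κ c₁ c₂ := by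
  unfold Fk
  congr 1
  refine integral_congr_ae (ae_of_all _ fun g => ?_)
  simpa [← sub_eq_add_neg] using (measurePreserving_neg_stdG.integral_comp
    (MeasurableEquiv.neg ℝ).measurableEmbedding fun z => f g * max (κ - c₁ * g + c₂ * z) 0 ^ 2
      + (1 - f g) * max (κ + c₁ * g + c₂ * z) 0 ^ 2).symm

lemma Fk_pos (hf : Measurable f) (hf01 : ∀ x, f x ∈ Icc (0 : ℝ) 1) {κ : ℝ} (hκ : 0 < κ)
    (c₁ c₂ : ℝ) : 0 < Fk f κ c₁ c₂ := by
  rw [Fk_eq_sqrt_integral_signAverage hf hf01, Real.sqrt_pos,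
    integral_pos_iff_support_of_nonneg _
      (integrable_signAverage hf hf01 (memLp_hinge κ c₁ c₂).integrable_sq)]
  · let bothActive : Set (ℝ × ℝ) :=
      {q | 0 < κ - c₁ * q.1 - c₂ * q.2} ∩ {q | 0 < κ - c₁ * -q.1 - c₂ * q.2}
    have isOpen_bothActive : IsOpen bothActive :=
      (isOpen_lt (by fun_prop) (by fun_prop)).inter (isOpen_lt (by fun_prop) (by fun_prop))
    refine (isOpen_bothActive.measure_pos _ ⟨0, by simpa [bothActive] using hκ⟩).trans_le
      (measure_mono fun q ⟨hq, hq'⟩ => ne_of_gt ?_)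
    have hinge_pos : 0 < hinge κ c₁ c₂ q ^ 2 := pow_pos (lt_max_of_lt_left hq) 2
    have hinge_neg_pos : 0 < hinge κ c₁ c₂ (-q.1, q.2) ^ 2 := pow_pos (lt_max_of_lt_left hq') 2
    unfold signAverage
    rcases (hf01 q.1).1.eq_or_lt with h | h
    · simpa [← h] using hinge_neg_pos
    · have := sub_nonneg.mpr (hf01 q.1).2
      positivity
  · intro q
    have := (hf01 q.1).1
    have := sub_nonneg.mpr (hf01 q.1).2
    simp only [Pi.zero_apply, signAverage]
    positivity

lemma exists_isPosPartNorm_Fk (hf : Measurable f) (hf01 : ∀ x, f x ∈ Icc (0 : ℝ) 1) :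
    ∃ e t z : Lp ℝ 2 (labelNoiseLaw f), IsPosPartNorm (Fk f) e t z := by
  have memLp_e := memLp_labelNoiseLaw hf01 (memLp_const (p := 2) (1 : ℝ))
  have memLp_t := memLp_labelNoiseLaw hf01 memLp_fst_stdG
  have memLp_z := memLp_labelNoiseLaw hf01 memLp_snd_stdG
  refine ⟨memLp_e.toLp, memLp_t.toLp, memLp_z.toLp, fun κ c₁ c₂ => ?_⟩
  have coeFn : Lp.posPart (affineVec memLp_e.toLp memLp_t.toLp memLp_z.toLp (κ, c₁, c₂))
      =ᵐ[labelNoiseLaw f] hinge κ c₁ c₂ := by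
    unfold affineVec
    rw [← MemLp.toLp_const_smul, ← MemLp.toLp_const_smul, ← MemLp.toLp_const_smul,
      ← MemLp.toLp_sub, ← MemLp.toLp_sub]
    filter_upwards [Lp.coeFn_posPart (((memLp_e.const_smul κ).sub (memLp_t.const_smul c₁)).sub
      (memLp_z.const_smul c₂)).toLp, (((memLp_e.const_smul κ).sub (memLp_t.const_smul c₁)).sub
      (memLp_z.const_smul c₂)).coeFn_toLp] with q h₁ h₂
    simp [h₁, h₂, hinge]
  rw [Fk_eq_sqrt_integral_signAverage hf hf01, ← integral_labelNoiseLaw hf hf01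
    (memLp_hinge κ c₁ c₂).integrable_sq ((continuous_hinge κ c₁ c₂).measurable.pow_const 2),
    Real.sqrt_eq_iff_eq_sq (integral_nonneg fun q => sq_nonneg _) (norm_nonneg _),
    ← real_inner_self_eq_norm_sq, L2.inner_def]
  refine integral_congr_ae ?_
  filter_upwards [coeFn] with q hq
  simp [hq, sq]

end GaussianRepresentation

section PropertiesOfFk

variable {f : ℝ → ℝ} {κ : ℝ}

lemma psiStar0_nonneg (f : ℝ → ℝ) : 0 ≤ psiStar0 f :=
  Real.iInf_nonneg fun _ => sq_nonneg _

lemma d2F_zero (f : ℝ → ℝ) (κ c₁ : ℝ) : d2F f κ c₁ 0 = 0 := by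
  have odd := deriv_comp_neg (fun c₂ => Fk f κ c₁ c₂) 0
  simp only [Fk_neg_right, neg_zero] at odd
  unfold d2F
  linarith

variable (hf : Measurable f) (hf01 : ∀ x, f x ∈ Icc (0 : ℝ) 1)

include hf hf01

lemma continuous_Fk : Continuous fun q : ℝ × ℝ × ℝ => Fk f q.1 q.2.1 q.2.2 := by
  obtain ⟨e, t, z, hF⟩ := exists_isPosPartNorm_Fk hf hf01
  exact hF.continuous

lemma exists_Fk_mul_le :
    ∃ C, ∀ κ, 0 ≤ κ → ∀ r, 0 ≤ r → ∀ c, Fk f κ (r * c) r ≤ κ * C + r * Fk f 0 c 1 := by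
  obtain ⟨e, t, z, hF⟩ := exists_isPosPartNorm_Fk hf hf01
  exact ⟨‖Lp.posPart e‖, fun κ hκ r hr c => hF.le_add_mul hκ hr c⟩

lemma isSubgradientPair_Fk (hκ : 0 < κ) : IsSubgradientPair (Fk f κ) (d1F f κ) (d2F f κ) := by
  obtain ⟨e, t, z, hF⟩ := exists_isPosPartNorm_Fk hf hf01
  intro a b a' b'
  have hpos := Fk_pos hf hf01 hκ a b
  rw [d1F, d2F, (hF.hasDerivAt_fst hpos).deriv, (hF.hasDerivAt_snd hpos).deriv]
  exact hF.isSubgradientPair κ a b a' b'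

lemma continuousAt_d1F (hκ : 0 < κ) (c₁ c₂ : ℝ) :
    ContinuousAt (fun q : ℝ × ℝ × ℝ => d1F f q.1 q.2.1 q.2.2) (κ, c₁, c₂) := by
  obtain ⟨e, t, z, hF⟩ := exists_isPosPartNorm_Fk hf hf01
  refine (hF.continuousAt_inner_direction (Fk_pos hf hf01 hκ c₁ c₂) t).congr ?_
  filter_upwards [continuous_fst.continuousAt.eventually_const_lt hκ] with q hq
  exact (hF.hasDerivAt_fst (Fk_pos hf hf01 hq _ _)).deriv.symm

lemma continuousAt_d2F (hκ : 0 < κ) (c₁ c₂ : ℝ) :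
    ContinuousAt (fun q : ℝ × ℝ × ℝ => d2F f q.1 q.2.1 q.2.2) (κ, c₁, c₂) := by
  obtain ⟨e, t, z, hF⟩ := exists_isPosPartNorm_Fk hf hf01
  refine (hF.continuousAt_inner_direction (Fk_pos hf hf01 hκ c₁ c₂) z).congr ?_
  filter_upwards [continuous_fst.continuousAt.eventually_const_lt hκ] with q hq
  exact (hF.hasDerivAt_snd (Fk_pos hf hf01 hq _ _)).deriv.symm

lemma continuous_d1F (hκ : 0 < κ) : Continuous fun q : ℝ × ℝ => d1F f κ q.1 q.2 :=
  continuous_iff_continuousAt.mpr fun q => ContinuousAt.comp (f := fun q : ℝ × ℝ => (κ, q.1, q.2))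
    (continuousAt_d1F hf hf01 hκ q.1 q.2) (by fun_prop)

lemma continuous_d2F (hκ : 0 < κ) : Continuous fun q : ℝ × ℝ => d2F f κ q.1 q.2 :=
  continuous_iff_continuousAt.mpr fun q => ContinuousAt.comp (f := fun q : ℝ × ℝ => (κ, q.1, q.2))
    (continuousAt_d2F hf hf01 hκ q.1 q.2) (by fun_prop)

lemma d2F_nonneg (hκ : 0 < κ) (c₁ : ℝ) {c₂ : ℝ} (hc₂ : 0 ≤ c₂) : 0 ≤ d2F f κ c₁ c₂ := by
  rcases hc₂.eq_or_lt with rfl | hc₂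
  · exact (d2F_zero f κ c₁).ge
  have := isSubgradientPair_Fk hf hf01 hκ c₁ c₂ c₁ (-c₂)
  rw [Fk_neg_right] at this
  by_contra! hneg
  nlinarith

lemma exists_Fk_mul_d2F_le :
    ∃ C, ∀ κ, 0 < κ → ∀ c₁ c₂, 0 ≤ c₂ → Fk f κ c₁ c₂ * d2F f κ c₁ c₂ ≤ c₂ * C := by
  obtain ⟨e, t, z, hF⟩ := exists_isPosPartNorm_Fk hf hf01
  have d2F_eq {κ : ℝ} (hκ : 0 < κ) (c₁ c₂ : ℝ) :
      d2F f κ c₁ c₂ = -⟪posPartDirection (affineVec e t z (κ, c₁, c₂)), z⟫ :=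
    (hF.hasDerivAt_snd (Fk_pos hf hf01 hκ c₁ c₂)).deriv
  refine ⟨‖z‖ ^ 2, fun κ hκ c₁ c₂ hc₂ => ?_⟩
  have inner_zero : ⟪posPartDirection (affineVec e t z (κ, c₁, 0)), z⟫ = 0 := by
    rw [← neg_eq_zero, ← d2F_eq hκ, d2F_zero]
  calc Fk f κ c₁ c₂ * d2F f κ c₁ c₂
      ≤ Fk f κ c₁ c₂ * |⟪posPartDirection (affineVec e t z (κ, c₁, c₂)), z⟫| := by
        rw [d2F_eq hκ]
        exact mul_le_mul_of_nonneg_left (neg_le_abs _) (Fk_pos hf hf01 hκ c₁ c₂).le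
    _ ≤ c₂ * ‖z‖ ^ 2 := by
        have := hF.mul_abs_inner_direction_le (c₂ := c₂) inner_zero
        rwa [abs_of_nonneg hc₂] at this

end PropertiesOfFk

section ResolventMoments

/-- The pairs `(b, σ)` for which the resolvent `x ↦ (b x + σ)⁻¹` is finite on `(0, ∞)`. -/
def resolventPairs : Set (ℝ × ℝ) := {p | 0 ≤ p.1 ∧ 0 ≤ p.2 ∧ 0 < p.1 + p.2}

/-- The moment `E_μ[V(X, W) X ^ i / (b X + σ) ^ j]` of the resolvent of `X` with weight `V`. -/
def resolventMoment (μ : Measure (ℝ × ℝ)) (V : ℝ × ℝ → ℝ) (i j : ℕ) (b σ : ℝ) : ℝ :=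
  ∫ q, V q * (q.1 ^ i / (b * q.1 + σ) ^ j) ∂μ

variable {μ : Measure (ℝ × ℝ)} {V : ℝ × ℝ → ℝ} {xmin xmax x b σ : ℝ}

lemma min_one_mul_add_le (hx : xmin ≤ x) (hb : 0 ≤ b) (hσ : 0 ≤ σ) :
    min xmin 1 * (b + σ) ≤ b * x + σ := by
  have hbx : b * min xmin 1 ≤ b * x := mul_le_mul_of_nonneg_left ((min_le_left _ _).trans hx) hb
  have hσ1 : σ * min xmin 1 ≤ σ * 1 := mul_le_mul_of_nonneg_left (min_le_right _ _) hσ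
  linarith

lemma norm_pow_div_resolvent_pow_le {δ : ℝ} (hxmin : 0 < xmin) (hx : x ∈ Icc xmin xmax)
    (hb : 0 ≤ b) (hσ : 0 ≤ σ) (hδ : 0 < δ) (hδb : δ ≤ b + σ) (i j : ℕ) :
    ‖x ^ i / (b * x + σ) ^ j‖ ≤ xmax ^ i / (min xmin 1 * δ) ^ j := by
  have x_pos : 0 < x := hxmin.trans_le hx.1
  have xmax_nonneg : 0 ≤ xmax := x_pos.le.trans hx.2
  have min_pos : 0 < min xmin 1 := lt_min hxmin one_pos
  have den_le : min xmin 1 * δ ≤ b * x + σ :=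
    (mul_le_mul_of_nonneg_left hδb min_pos.le).trans (min_one_mul_add_le hx.1 hb hσ)
  have den_pos : 0 < b * x + σ := (mul_pos min_pos hδ).trans_le den_le
  rw [Real.norm_of_nonneg (by positivity)]
  gcongr
  exact hx.2

variable (hxmin : 0 < xmin) (hsupp : ∀ᵐ q ∂μ, q.1 ∈ Icc xmin xmax)
include hxmin hsupp

lemma ae_pos_and_resolvent_pos (hp : (b, σ) ∈ resolventPairs) :
    ∀ᵐ q ∂μ, 0 < q.1 ∧ 0 < b * q.1 + σ := by
  filter_upwards [hsupp] with q hq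
  exact ⟨hxmin.trans_le hq.1, (mul_pos (lt_min hxmin one_pos) hp.2.2).trans_le
    (min_one_mul_add_le hq.1 hp.1 hp.2.1)⟩

lemma integrable_mul_resolvent (hV : Integrable V μ) (i j : ℕ) (hp : (b, σ) ∈ resolventPairs) :
    Integrable (fun q => V q * (q.1 ^ i / (b * q.1 + σ) ^ j)) μ := by
  obtain ⟨hb, hσ, hbσ⟩ := hp
  refine hV.mul_bdd (c := xmax ^ i / (min xmin 1 * (b + σ)) ^ j)
    (Measurable.aestronglyMeasurable (by fun_prop)) ?_
  filter_upwards [hsupp] with q hq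
  exact norm_pow_div_resolvent_pow_le hxmin hq hb hσ hbσ le_rfl i j

lemma continuousOn_resolventMoment (hV : Integrable V μ) (i j : ℕ) :
    ContinuousOn (fun p : ℝ × ℝ => resolventMoment μ V i j p.1 p.2) resolventPairs := by
  intro p hp
  have near : ∀ᶠ p' : ℝ × ℝ in 𝓝[resolventPairs] p, (p.1 + p.2) / 2 < p'.1 + p'.2 :=
    nhdsWithin_le_nhds ((continuous_fst.add continuous_snd).tendsto p
      (lt_mem_nhds (half_lt_self hp.2.2)))
  refine continuousWithinAt_of_dominated
    (bound := fun q => ‖V q‖ * (xmax ^ i / (min xmin 1 * ((p.1 + p.2) / 2)) ^ j))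
    (Eventually.of_forall fun p' => hV.1.mul (Measurable.aestronglyMeasurable (by fun_prop)))
    ?_ (hV.norm.mul_const _) ?_
  · filter_upwards [near, self_mem_nhdsWithin] with p' hpp' hp'
    filter_upwards [hsupp] with q hq
    rw [norm_mul]
    gcongr
    exact norm_pow_div_resolvent_pow_le hxmin hq hp'.1 hp'.2.1 (half_pos hp.2.2) hpp'.le i j
  · filter_upwards [ae_pos_and_resolvent_pos hxmin hsupp hp] with q hq
    have den_continuous : Continuous fun p' : ℝ × ℝ => (p'.1 * q.1 + p'.2) ^ j := by fun_prop
    exact (continuousAt_const.mul (continuousAt_const.div den_continuous.continuousAt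
      (pow_pos hq.2 j).ne')).continuousWithinAt

lemma resolventMoment_two_two_le (hV : Integrable V μ) (hV0 : ∀ q, 0 ≤ V q)
    (hp : (b, σ) ∈ resolventPairs) :
    resolventMoment μ V 2 2 b σ ≤ xmax * resolventMoment μ V 1 2 b σ := by
  unfold resolventMoment
  rw [← integral_const_mul]
  refine integral_mono_ae (integrable_mul_resolvent hxmin hsupp hV 2 2 hp)
    ((integrable_mul_resolvent hxmin hsupp hV 1 2 hp).const_mul _) ?_
  filter_upwards [hsupp, ae_pos_and_resolvent_pos hxmin hsupp hp] with q hq ⟨x_pos, den_pos⟩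
  have := hV0 q
  calc V q * (q.1 ^ 2 / (b * q.1 + σ) ^ 2)
      ≤ V q * (xmax * q.1 ^ 1 / (b * q.1 + σ) ^ 2) := by
        gcongr
        nlinarith [hq.2]
    _ = xmax * (V q * (q.1 ^ 1 / (b * q.1 + σ) ^ 2)) := by ring

lemma resolventMoment_one_two_le (hV : Integrable V μ) (hV0 : ∀ q, 0 ≤ V q)
    (hb : 0 ≤ b) (hσ : 0 < σ) :
    resolventMoment μ V 1 2 b σ ≤ (∫ q, V q ∂μ) * (xmax / σ ^ 2) := by
  have hp : (b, σ) ∈ resolventPairs := ⟨hb, hσ.le, by positivity⟩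
  rw [← integral_mul_const]
  refine integral_mono_ae (integrable_mul_resolvent hxmin hsupp hV 1 2 hp) (hV.mul_const _) ?_
  filter_upwards [hsupp] with q hq
  have x_pos : 0 < q.1 := hxmin.trans_le hq.1
  have xmax_nonneg : 0 ≤ xmax := x_pos.le.trans hq.2
  have := hV0 q
  gcongr
  · simpa only [pow_one] using hq.2
  · exact le_add_of_nonneg_left (by positivity)

lemma le_resolventMoment (hV : Integrable V μ) (hV0 : ∀ q, 0 ≤ V q) (i : ℕ)
    (hp : (b, σ) ∈ resolventPairs) :
    (∫ q, V q ∂μ) * (xmin ^ i / (b * xmax + σ) ^ 2) ≤ resolventMoment μ V i 2 b σ := by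
  rw [← integral_mul_const]
  refine integral_mono_ae (hV.mul_const _) (integrable_mul_resolvent hxmin hsupp hV i 2 hp) ?_
  filter_upwards [hsupp, ae_pos_and_resolvent_pos hxmin hsupp hp] with q hq ⟨_, den_pos⟩
  have := hV0 q
  have := hp.1
  gcongr
  exacts [hq.1, hq.2]

/-- Cauchy–Schwarz for the probability measure `V μ`. -/
lemma resolventMoment_one_one_sq_le (hV : Integrable V μ) (hV0 : ∀ q, 0 ≤ V q)
    (hV1 : ∫ q, V q ∂μ = 1) (hp : (b, σ) ∈ resolventPairs) :
    resolventMoment μ V 1 1 b σ ^ 2 ≤ resolventMoment μ V 2 2 b σ := by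
  set m := resolventMoment μ V 1 1 b σ
  have int_one := integrable_mul_resolvent hxmin hsupp hV 1 1 hp
  have int_two := integrable_mul_resolvent hxmin hsupp hV 2 2 hp
  have variance_eq : ∫ q, V q * (q.1 ^ 1 / (b * q.1 + σ) ^ 1 - m) ^ 2 ∂μ
      = resolventMoment μ V 2 2 b σ - 2 * m * m + m ^ 2 * 1 := by
    have expand (q : ℝ × ℝ) : V q * (q.1 ^ 1 / (b * q.1 + σ) ^ 1 - m) ^ 2
        = V q * (q.1 ^ 2 / (b * q.1 + σ) ^ 2)
          - 2 * m * (V q * (q.1 ^ 1 / (b * q.1 + σ) ^ 1)) + m ^ 2 * V q := by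
      rw [← div_pow, ← div_pow]
      ring
    have int_sub : Integrable (fun q => V q * (q.1 ^ 2 / (b * q.1 + σ) ^ 2)
        - 2 * m * (V q * (q.1 ^ 1 / (b * q.1 + σ) ^ 1))) μ := int_two.sub (int_one.const_mul _)
    simp_rw [expand]
    rw [integral_add int_sub (hV.const_mul _),
      integral_sub int_two (int_one.const_mul _), integral_const_mul, integral_const_mul, hV1]
    rfl
  have variance_nonneg : 0 ≤ ∫ q, V q * (q.1 ^ 1 / (b * q.1 + σ) ^ 1 - m) ^ 2 ∂μ :=
    integral_nonneg fun q => mul_nonneg (hV0 q) (sq_nonneg _)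
  linarith

lemma resolventMoment_self_zero (i : ℕ) :
    resolventMoment μ V i i b 0 = (∫ q, V q ∂μ) * (b ^ i)⁻¹ := by
  rw [← integral_mul_const]
  refine integral_congr_ae ?_
  filter_upwards [hsupp] with q hq
  have pow_ne : q.1 ^ i ≠ 0 := (pow_pos (hxmin.trans_le hq.1) i).ne'
  rw [add_zero, mul_pow, div_mul_cancel_right₀ pow_ne]

end ResolventMoments

section ReducedSystem

/-- The weight `ψ + A² W²`, the squared norm of the vector `(A W, √ψ)`. -/
def sourceWeight (ψ A : ℝ) (q : ℝ × ℝ) : ℝ := ψ + A ^ 2 * q.2 ^ 2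

/-- The first two equations of the system with `A`, `b = c₂⁻¹ ∂₂F` and `σ = √ψ s` as independent
unknowns: stationarity of the Lagrangian with multiplier `σ`. -/
def IsStationary (μ : Measure (ℝ × ℝ)) (ψ c₁ c₂ A b σ : ℝ) : Prop :=
  -c₁ = A * resolventMoment μ (fun q => q.2 ^ 2) 1 1 b σ ∧
    c₁ ^ 2 + c₂ ^ 2 = resolventMoment μ (sourceWeight ψ A) 2 2 b σ

/-- The third equation of the system in the unknowns `A`, `b` and `σ = √ψ s`: the stationary vector
lies on the unit sphere. -/
def IsNormalized (μ : Measure (ℝ × ℝ)) (ψ A b σ : ℝ) : Prop :=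
  1 = resolventMoment μ (sourceWeight ψ A) 1 2 b σ

/-- The paper's `A = ∂₁F_κ(c₁, c₂) − c₁ c₂⁻¹ ∂₂F_κ(c₁, c₂)`. -/
def signalCoeff (f : ℝ → ℝ) (κ c₁ c₂ : ℝ) : ℝ := d1F f κ c₁ c₂ - c₁ * c₂⁻¹ * d2F f κ c₁ c₂

/-- The coefficient `c₂⁻¹ ∂₂F_κ(c₁, c₂)` of `X^{1/2}` in the paper's `D`. -/
def radialCoeff (f : ℝ → ℝ) (κ c₁ c₂ : ℝ) : ℝ := c₂⁻¹ * d2F f κ c₁ c₂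

lemma mul_sqrt_add_mul_inv_sqrt {x : ℝ} (hx : 0 < x) (b σ : ℝ) :
    b * √x + σ * (√x)⁻¹ = (b * x + σ) / √x := by
  have sqrt_ne : √x ≠ 0 := (Real.sqrt_pos.mpr hx).ne'
  field_simp
  rw [Real.sq_sqrt hx.le]

lemma div_mul_sqrt_add_mul_inv_sqrt_sq {x : ℝ} (hx : 0 < x) (b σ y : ℝ) :
    y / (b * √x + σ * (√x)⁻¹) ^ 2 = y * (x ^ 1 / (b * x + σ) ^ 2) := by
  rw [mul_sqrt_add_mul_inv_sqrt hx, div_pow, Real.sq_sqrt hx.le, pow_one, div_div_eq_mul_div,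
    mul_div_assoc]

variable {μ : Measure (ℝ × ℝ)} {xmin xmax ψ c₁ c₂ A b σ : ℝ}

section Support
variable (hxmin : 0 < xmin) (hsupp : ∀ᵐ q ∂μ, q.1 ∈ Icc xmin xmax)
include hxmin hsupp

theorem solSysMu_iff {f : ℝ → ℝ} {κ s : ℝ} :
    SolSysMu f μ ψ κ c₁ c₂ s ↔
      IsStationary μ ψ c₁ c₂ (signalCoeff f κ c₁ c₂) (radialCoeff f κ c₁ c₂) (√ψ * s) ∧
        IsNormalized μ ψ (signalCoeff f κ c₁ c₂) (radialCoeff f κ c₁ c₂) (√ψ * s) := by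
  have x_pos : ∀ᵐ q ∂μ, 0 < q.1 := hsupp.mono fun q hq => hxmin.trans_le hq.1
  rw [IsStationary, and_assoc]
  refine and_congr ?_ (and_congr ?_ ?_) <;> refine Eq.congr_right ?_
  · rw [resolventMoment, ← integral_const_mul]
    refine integral_congr_ae (x_pos.mono fun q hq => ?_)
    change signalCoeff f κ c₁ c₂ * q.2 ^ 2 * √q.1 /
      (radialCoeff f κ c₁ c₂ * √q.1 + √ψ * s * (√q.1)⁻¹) = _
    rw [mul_sqrt_add_mul_inv_sqrt hq, div_div_eq_mul_div, mul_assoc _ (√q.1), mul_self_sqrt hq.le]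
    simp only [pow_one]
    ring
  · refine integral_congr_ae (x_pos.mono fun q hq => ?_)
    refine (div_mul_sqrt_add_mul_inv_sqrt_sq hq _ _ _).trans ?_
    simp only [sourceWeight, signalCoeff, radialCoeff]
    ring
  · exact integral_congr_ae (x_pos.mono fun q hq => div_mul_sqrt_add_mul_inv_sqrt_sq hq _ _ _)

end Support

lemma sourceWeight_nonneg (hψ : 0 ≤ ψ) (A : ℝ) (q : ℝ × ℝ) : 0 ≤ sourceWeight ψ A q := by
  unfold sourceWeight
  positivity

variable (hW : ∫ q, q.2 ^ 2 ∂μ = 1)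
include hW

lemma integrable_snd_sq : Integrable (fun q : ℝ × ℝ => q.2 ^ 2) μ :=
  .of_integral_ne_zero (hW ▸ one_ne_zero)

variable [IsProbabilityMeasure μ]

lemma integrable_sourceWeight (ψ A : ℝ) : Integrable (sourceWeight ψ A) μ :=
  (integrable_const ψ).add ((integrable_snd_sq hW).const_mul _)

lemma integral_sourceWeight (ψ A : ℝ) : ∫ q, sourceWeight ψ A q ∂μ = ψ + A ^ 2 := by
  unfold sourceWeight
  rw [integral_add (integrable_const ψ) ((integrable_snd_sq hW).const_mul _), integral_const_mul,
    hW, integral_const, probReal_univ, one_smul, mul_one]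

variable (hxmin : 0 < xmin) (hsupp : ∀ᵐ q ∂μ, q.1 ∈ Icc xmin xmax)
include hxmin hsupp

lemma resolventMoment_sourceWeight (ψ A : ℝ) (i j : ℕ) (hp : (b, σ) ∈ resolventPairs) :
    resolventMoment μ (sourceWeight ψ A) i j b σ
      = ψ * resolventMoment μ (fun _ => 1) i j b σ
        + A ^ 2 * resolventMoment μ (fun q => q.2 ^ 2) i j b σ := by
  unfold resolventMoment
  rw [← integral_const_mul, ← integral_const_mul, ← integral_add
    ((integrable_mul_resolvent hxmin hsupp (integrable_const 1) i j hp).const_mul _)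
    ((integrable_mul_resolvent hxmin hsupp (integrable_snd_sq hW) i j hp).const_mul _)]
  refine integral_congr_ae (.of_forall fun q => ?_)
  simp only [sourceWeight]
  ring

omit hW in
lemma mul_add_pos_of_mem_resolventPairs (hp : (b, σ) ∈ resolventPairs) : 0 < b * xmax + σ := by
  obtain ⟨q, hq⟩ := hsupp.exists
  exact (mul_pos (lt_min hxmin one_pos) hp.2.2).trans_le
    (min_one_mul_add_le (hq.1.trans hq.2) hp.1 hp.2.1)

namespace IsNormalized

lemma add_sq_le (hn : IsNormalized μ ψ A b σ) (hs : IsStationary μ ψ c₁ c₂ A b σ) (hψ : 0 ≤ ψ)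
    (hp : (b, σ) ∈ resolventPairs) : c₁ ^ 2 + c₂ ^ 2 ≤ xmax := by
  rw [hs.2]
  have := resolventMoment_two_two_le hxmin hsupp (integrable_sourceWeight hW ψ A)
    (sourceWeight_nonneg hψ A) hp
  rwa [← hn, mul_one] at this

lemma sq_le (hn : IsNormalized μ ψ A b σ) (hψ : 0 ≤ ψ) (hb : 0 ≤ b) (hσ : 0 < σ) :
    σ ^ 2 ≤ (ψ + A ^ 2) * xmax := by
  have := resolventMoment_one_two_le hxmin hsupp (integrable_sourceWeight hW ψ A)
    (sourceWeight_nonneg hψ A) hb hσ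
  rwa [← hn, integral_sourceWeight hW, ← mul_div_assoc, one_le_div (by positivity)] at this

lemma mul_le_sq (hn : IsNormalized μ ψ A b σ) (hψ : 0 ≤ ψ) (hp : (b, σ) ∈ resolventPairs) :
    ψ * xmin ≤ (b * xmax + σ) ^ 2 := by
  have := le_resolventMoment hxmin hsupp (integrable_sourceWeight hW ψ A)
    (sourceWeight_nonneg hψ A) 1 hp
  rw [← hn, integral_sourceWeight hW, pow_one, ← mul_div_assoc] at this
  have den_pos := pow_pos (mul_add_pos_of_mem_resolventPairs hxmin hsupp hp) 2
  linarith [(div_le_one₀ den_pos).mp this, mul_nonneg (sq_nonneg A) hxmin.le]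

end IsNormalized

lemma IsStationary.ne_zero (hs : IsStationary μ ψ c₁ c₂ A b σ) (hψ : 0 < ψ)
    (hp : (b, σ) ∈ resolventPairs) : c₂ ≠ 0 := by
  have signal_le : c₁ ^ 2 ≤ A ^ 2 * resolventMoment μ (fun q => q.2 ^ 2) 2 2 b σ := by
    rw [← neg_sq, hs.1, mul_pow]
    exact mul_le_mul_of_nonneg_left (resolventMoment_one_one_sq_le hxmin hsupp
      (integrable_snd_sq hW) (fun q => sq_nonneg q.2) hW hp) (sq_nonneg A)
  have noise_pos : 0 < resolventMoment μ (fun _ => 1) 2 2 b σ := by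
    have den_pos := mul_add_pos_of_mem_resolventPairs hxmin hsupp hp
    have := le_resolventMoment hxmin hsupp (integrable_const 1) (fun _ => zero_le_one) 2 hp
    rw [integral_const, probReal_univ, one_smul, one_mul] at this
    exact (by positivity : 0 < xmin ^ 2 / (b * xmax + σ) ^ 2).trans_le this
  have energy := hs.2
  rw [resolventMoment_sourceWeight hW hxmin hsupp ψ A 2 2 hp] at energy
  refine (pow_ne_zero_iff two_ne_zero).mp (ne_of_gt ?_)
  linarith [mul_pos hψ noise_pos]

lemma IsStationary.eq_of_zero (hs : IsStationary μ ψ c₁ c₂ A b 0) (hb : 0 < b) :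
    A = -(c₁ * b) ∧ (b * c₂) ^ 2 = ψ := by
  obtain ⟨first, second⟩ := hs
  rw [resolventMoment_self_zero hxmin hsupp, hW, one_mul, pow_one, ← div_eq_mul_inv,
    eq_div_iff hb.ne'] at first
  rw [resolventMoment_self_zero hxmin hsupp, integral_sourceWeight hW, ← div_eq_mul_inv,
    eq_div_iff (by positivity)] at second
  have A_eq : A = -(c₁ * b) := by linarith
  refine ⟨A_eq, ?_⟩
  rw [A_eq] at second
  linarith

section Limits
variable {ι : Type*} {l : Filter ι} {ψ' c₁' c₂' A' b' σ' : ι → ℝ}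
  (hA : Tendsto A' l (𝓝 A)) (hb : Tendsto b' l (𝓝 b)) (hσ : Tendsto σ' l (𝓝 σ))
  (hψ : Tendsto ψ' l (𝓝 ψ))
  (hp : (b, σ) ∈ resolventPairs) (hp' : ∀ᶠ i in l, (b' i, σ' i) ∈ resolventPairs)

omit hW [IsProbabilityMeasure μ] in
include hb hσ hp hp' in
lemma tendsto_resolventMoment {V : ℝ × ℝ → ℝ} (hV : Integrable V μ) (m n : ℕ) :
    Tendsto (fun i => resolventMoment μ V m n (b' i) (σ' i)) l
      (𝓝 (resolventMoment μ V m n b σ)) := by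
  have pair : Tendsto (fun i => (b' i, σ' i)) l (𝓝[resolventPairs] (b, σ)) :=
    tendsto_nhdsWithin_iff.mpr ⟨hb.prodMk_nhds hσ, hp'⟩
  simpa only [Function.comp_def] using
    (continuousOn_resolventMoment hxmin hsupp hV m n (b, σ) hp).tendsto.comp pair

include hA hb hσ hψ hp hp'

lemma tendsto_resolventMoment_sourceWeight (m n : ℕ) :
    Tendsto (fun i => resolventMoment μ (sourceWeight (ψ' i) (A' i)) m n (b' i) (σ' i)) l
      (𝓝 (resolventMoment μ (sourceWeight ψ A) m n b σ)) := by
  rw [resolventMoment_sourceWeight hW hxmin hsupp ψ A m n hp]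
  refine ((hψ.mul (tendsto_resolventMoment hxmin hsupp hb hσ hp hp' (integrable_const 1) m n)).add
    ((hA.pow 2).mul (tendsto_resolventMoment hxmin hsupp hb hσ hp hp' (integrable_snd_sq hW)
      m n))).congr' ?_
  filter_upwards [hp'] with i hi
  rw [resolventMoment_sourceWeight hW hxmin hsupp _ _ m n hi]

lemma IsStationary.of_tendsto [l.NeBot] (hc₁ : Tendsto c₁' l (𝓝 c₁)) (hc₂ : Tendsto c₂' l (𝓝 c₂))
    (hs : ∀ᶠ i in l, IsStationary μ (ψ' i) (c₁' i) (c₂' i) (A' i) (b' i) (σ' i)) :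
    IsStationary μ ψ c₁ c₂ A b σ :=
  ⟨tendsto_nhds_unique_of_eventuallyEq hc₁.neg
      (hA.mul (tendsto_resolventMoment hxmin hsupp hb hσ hp hp' (integrable_snd_sq hW) 1 1))
      (hs.mono fun _ hi => hi.1),
    tendsto_nhds_unique_of_eventuallyEq ((hc₁.pow 2).add (hc₂.pow 2))
      (tendsto_resolventMoment_sourceWeight hW hxmin hsupp hA hb hσ hψ hp hp' 2 2)
      (hs.mono fun _ hi => hi.2)⟩

lemma IsNormalized.of_tendsto [l.NeBot]
    (hn : ∀ᶠ i in l, IsNormalized μ (ψ' i) (A' i) (b' i) (σ' i)) : IsNormalized μ ψ A b σ :=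
  tendsto_nhds_unique_of_eventuallyEq tendsto_const_nhds
    (tendsto_resolventMoment_sourceWeight hW hxmin hsupp hA hb hσ hψ hp hp' 1 2) hn

end Limits

end ReducedSystem

section Multiplier

variable {f : ℝ → ℝ} (hf : Measurable f) (hf01 : ∀ x, f x ∈ Icc (0 : ℝ) 1)
include hf hf01

lemma radialCoeff_nonneg {κ : ℝ} (hκ : 0 < κ) (c₁ : ℝ) {c₂ : ℝ} (hc₂ : 0 ≤ c₂) :
    0 ≤ radialCoeff f κ c₁ c₂ :=
  mul_nonneg (inv_nonneg.mpr hc₂) (d2F_nonneg hf hf01 hκ c₁ hc₂)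

/-- If both slopes were `(0, √ψ)`, convexity would force `F_κ(t c, t) ≥ √ψ t - const`, whereas
`F_κ(t c, t)` grows at most like `t F₀(c, 1)`. -/
lemma not_d1F_eq_zero_and_d2F_eq_sqrt {κ ψ : ℝ} (hκ : 0 < κ) (hψ : psiStar0 f < ψ) (c₁ c₂ : ℝ) :
    ¬(d1F f κ c₁ c₂ = 0 ∧ d2F f κ c₁ c₂ = √ψ) := by
  rintro ⟨d1F_eq, d2F_eq⟩
  obtain ⟨c, hc⟩ := exists_lt_of_ciInf_lt hψ
  have slope_lt : 0 < √ψ - Fk f 0 c 1 := sub_pos.mpr (Real.lt_sqrt_of_sq_lt hc)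
  obtain ⟨C, growth⟩ := exists_Fk_mul_le hf hf01
  obtain ⟨n, hn⟩ := exists_nat_gt ((κ * C - Fk f κ c₁ c₂ + √ψ * c₂) / (√ψ - Fk f 0 c 1))
  rw [div_lt_iff₀ slope_lt] at hn
  have upper := growth κ hκ.le n n.cast_nonneg c
  have lower := isSubgradientPair_Fk hf hf01 hκ c₁ c₂ (n * c) n
  rw [d1F_eq, d2F_eq] at lower
  linarith

theorem not_isStationary_zero {μ : Measure (ℝ × ℝ)} [IsProbabilityMeasure μ] {xmin xmax : ℝ}
    (hW : ∫ q, q.2 ^ 2 ∂μ = 1) (hxmin : 0 < xmin) (hsupp : ∀ᵐ q ∂μ, q.1 ∈ Icc xmin xmax)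
    {κ ψ c₁ c₂ : ℝ} (hκ : 0 < κ) (hψ : psiStar0 f < ψ) (hc₂ : 0 < c₂)
    (hb : 0 < radialCoeff f κ c₁ c₂) :
    ¬IsStationary μ ψ c₁ c₂ (signalCoeff f κ c₁ c₂) (radialCoeff f κ c₁ c₂) 0 := by
  intro hs
  obtain ⟨signal_eq, radial_sq⟩ := hs.eq_of_zero hW hxmin hsupp hb
  have d2F_eq : radialCoeff f κ c₁ c₂ * c₂ = d2F f κ c₁ c₂ := by
    rw [radialCoeff]
    field_simp
  refine not_d1F_eq_zero_and_d2F_eq_sqrt hf hf01 hκ hψ c₁ c₂ ⟨?_, ?_⟩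
  · rw [signalCoeff, mul_assoc, ← radialCoeff] at signal_eq
    linarith
  · rw [← radial_sq, d2F_eq, Real.sqrt_sq (d2F_nonneg hf hf01 hκ c₁ hc₂.le)]

end Multiplier

section MultiplicationOperator

variable {α E : Type*} {m : MeasurableSpace α} {ν : Measure α} [NormedAddCommGroup E]
  [InnerProductSpace ℝ E] {φ : α → ℝ}

/-- Multiplication by the essentially bounded function `φ`, as an operator on `L²(ν; E)`. -/
def mulLp (E : Type*) [NormedAddCommGroup E] [InnerProductSpace ℝ E] (hφ : MemLp φ ⊤ ν) :
    Lp E 2 ν →L[ℝ] Lp E 2 ν :=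
  (ContinuousLinearMap.lsmul ℝ ℝ).holderL ν ⊤ 2 2 (hφ.toLp φ)

variable (hφ : MemLp φ ⊤ ν)

lemma coeFn_mulLp (x : Lp E 2 ν) : mulLp E hφ x =ᵐ[ν] fun q => φ q • x q := by
  filter_upwards [(ContinuousLinearMap.lsmul ℝ ℝ).coeFn_holder (r := 2) (hφ.toLp φ) x,
    hφ.coeFn_toLp] with q product factor
  rw [← factor]
  exact product

lemma inner_mulLp_left (x y : Lp E 2 ν) : ⟪mulLp E hφ x, y⟫ = ∫ q, φ q * ⟪x q, y q⟫ ∂ν := by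
  rw [L2.inner_def]
  refine integral_congr_ae ?_
  filter_upwards [coeFn_mulLp hφ x] with q hq
  rw [hq, real_inner_smul_left]

lemma norm_mulLp_sq (x : Lp E 2 ν) : ‖mulLp E hφ x‖ ^ 2 = ∫ q, φ q ^ 2 * ‖x q‖ ^ 2 ∂ν := by
  rw [← real_inner_self_eq_norm_sq, inner_mulLp_left]
  refine integral_congr_ae ?_
  filter_upwards [coeFn_mulLp hφ x] with q hq
  rw [hq, real_inner_smul_right, real_inner_self_eq_norm_sq]
  ring

lemma adjoint_mulLp [CompleteSpace E] : (mulLp E hφ).adjoint = mulLp E hφ := by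
  refine ((ContinuousLinearMap.eq_adjoint_iff _ _).mpr fun x y => ?_).symm
  rw [inner_mulLp_left, real_inner_comm, inner_mulLp_left]
  simp only [real_inner_comm]

end MultiplicationOperator

section HilbertModel

variable {μ : Measure (ℝ × ℝ)} {xmin xmax ψ A b σ : ℝ}

lemma memLp_sqrt_fst (hsupp : ∀ᵐ q ∂μ, q.1 ∈ Icc xmin xmax) :
    MemLp (fun q : ℝ × ℝ => √q.1) ⊤ μ := by
  refine memLp_top_of_bound (Measurable.aestronglyMeasurable (by fun_prop)) √xmax ?_
  filter_upwards [hsupp] with q hq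
  rw [Real.norm_of_nonneg (Real.sqrt_nonneg _)]
  exact Real.sqrt_le_sqrt hq.2

lemma memLp_sqrt_fst_div (hxmin : 0 < xmin) (hsupp : ∀ᵐ q ∂μ, q.1 ∈ Icc xmin xmax)
    (hp : (b, σ) ∈ resolventPairs) : MemLp (fun q : ℝ × ℝ => √q.1 / (b * q.1 + σ)) ⊤ μ := by
  refine memLp_top_of_bound (Measurable.aestronglyMeasurable (by fun_prop))
    (√xmax / (min xmin 1 * (b + σ))) ?_
  filter_upwards [hsupp] with q hq
  have min_pos := mul_pos (lt_min hxmin one_pos) hp.2.2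
  have den_le := min_one_mul_add_le hq.1 hp.1 hp.2.1
  rw [Real.norm_of_nonneg (div_nonneg (Real.sqrt_nonneg _) (min_pos.le.trans den_le))]
  gcongr
  exact hq.2

variable (hxmin : 0 < xmin) (hsupp : ∀ᵐ q ∂μ, q.1 ∈ Icc xmin xmax)
  (hp : (b, σ) ∈ resolventPairs)

/-- The operator `S` of multiplication by `X^{1/2}` on `L²(μ; ℝ²)`, where `ℝ²` is encoded as `ℂ`. -/
def sqrtOp : Lp ℂ 2 μ →L[ℝ] Lp ℂ 2 μ := mulLp ℂ (memLp_sqrt_fst hsupp)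

/-- The operator `S (b S² + σ)⁻¹` of multiplication by `X^{1/2} / (b X + σ)`. -/
def resolventOp : Lp ℂ 2 μ →L[ℝ] Lp ℂ 2 μ := mulLp ℂ (memLp_sqrt_fst_div hxmin hsupp hp)

lemma coeFn_sqrtOp (h : Lp ℂ 2 μ) : sqrtOp hsupp h =ᵐ[μ] fun q => √q.1 • h q :=
  coeFn_mulLp _ h

lemma coeFn_resolventOp (v : Lp ℂ 2 μ) :
    resolventOp hxmin hsupp hp v =ᵐ[μ] fun q => (√q.1 / (b * q.1 + σ)) • v q :=
  coeFn_mulLp _ v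

lemma sqrt_smul_add_eq_iff {E : Type*} [AddCommGroup E] [Module ℝ E] {x : ℝ} (hx : 0 ≤ x)
    (hden : b * x + σ ≠ 0) (h v : E) :
    √x • (b • √x • h + v) = -(σ • h) ↔ h = -((√x / (b * x + σ)) • v) := by
  have expand : √x • (b • √x • h + v) + σ • h = (b * x + σ) • (h + (√x / (b * x + σ)) • v) := by
    simp only [smul_add, smul_smul, mul_div_cancel₀ _ hden, mul_left_comm _ b,
      Real.mul_self_sqrt hx, add_smul]
    abel
  rw [eq_neg_iff_add_eq_zero, expand, smul_eq_zero_iff_right hden, eq_neg_iff_add_eq_zero]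

lemma sqrtOp_smul_add_eq_iff (h v : Lp ℂ 2 μ) :
    sqrtOp hsupp (b • sqrtOp hsupp h + v) = -(σ • h) ↔ h = -resolventOp hxmin hsupp hp v := by
  rw [Lp.ext_iff, Lp.ext_iff]
  refine eventually_congr ?_
  filter_upwards [ae_pos_and_resolvent_pos hxmin hsupp hp,
    coeFn_sqrtOp hsupp (b • sqrtOp hsupp h + v), coeFn_sqrtOp hsupp h,
    coeFn_resolventOp hxmin hsupp hp v,
    Lp.coeFn_add (b • sqrtOp hsupp h) v, Lp.coeFn_smul b (sqrtOp hsupp h),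
    Lp.coeFn_neg (σ • h), Lp.coeFn_smul σ h, Lp.coeFn_neg (resolventOp hxmin hsupp hp v)]
    with q hq outer inner_h res_v add_q smul_q neg_q smul_h neg_v
  rw [outer, add_q, neg_q, neg_v, Pi.add_apply, smul_q, Pi.neg_apply, smul_h, Pi.neg_apply, res_v,
    Pi.smul_apply, Pi.smul_apply, inner_h]
  exact sqrt_smul_add_eq_iff hq.1.le hq.2.ne' (h q) (v q)

lemma coeFn_sqrtOp_resolventOp (v : Lp ℂ 2 μ) :
    sqrtOp hsupp (resolventOp hxmin hsupp hp v) =ᵐ[μ] fun q => (q.1 / (b * q.1 + σ)) • v q := by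
  filter_upwards [ae_pos_and_resolvent_pos hxmin hsupp hp,
    coeFn_sqrtOp hsupp (resolventOp hxmin hsupp hp v),
    coeFn_resolventOp hxmin hsupp hp v] with q hq outer res_v
  rw [outer, res_v, smul_smul, mul_div, Real.mul_self_sqrt hq.1.le]

lemma inner_sqrtOp_resolventOp (v w : Lp ℂ 2 μ) :
    ⟪sqrtOp hsupp (resolventOp hxmin hsupp hp v), w⟫
      = resolventMoment μ (fun q => ⟪v q, w q⟫) 1 1 b σ := by
  rw [L2.inner_def]
  refine integral_congr_ae ?_
  filter_upwards [coeFn_sqrtOp_resolventOp hxmin hsupp hp v] with q hq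
  rw [hq, real_inner_smul_left, pow_one, pow_one, mul_comm]

lemma norm_sqrtOp_resolventOp_sq (v : Lp ℂ 2 μ) :
    ‖sqrtOp hsupp (resolventOp hxmin hsupp hp v)‖ ^ 2
      = resolventMoment μ (fun q => ‖v q‖ ^ 2) 2 2 b σ := by
  rw [← real_inner_self_eq_norm_sq, L2.inner_def]
  refine integral_congr_ae ?_
  filter_upwards [coeFn_sqrtOp_resolventOp hxmin hsupp hp v] with q hq
  rw [hq, real_inner_self_eq_norm_sq, norm_smul, mul_pow, norm_eq_abs, sq_abs, div_pow, mul_comm]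

lemma norm_resolventOp_sq (v : Lp ℂ 2 μ) :
    ‖resolventOp hxmin hsupp hp v‖ ^ 2 = resolventMoment μ (fun q => ‖v q‖ ^ 2) 1 2 b σ := by
  rw [resolventOp, norm_mulLp_sq, resolventMoment]
  refine integral_congr_ae ?_
  filter_upwards [ae_pos_and_resolvent_pos hxmin hsupp hp] with q hq
  rw [div_pow, Real.sq_sqrt hq.1.le, pow_one, mul_comm]

variable {w g : Lp ℂ 2 μ} (hw : w =ᵐ[μ] fun q => (q.2 : ℂ)) (hg : g =ᵐ[μ] fun _ => Complex.I)

include hw hg in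
lemma coeFn_smul_add_smul (A r : ℝ) : A • w + r • g =ᵐ[μ] fun q => (⟨A * q.2, r⟩ : ℂ) := by
  filter_upwards [Lp.coeFn_add (A • w) (r • g), Lp.coeFn_smul A w, Lp.coeFn_smul r g, hw, hg]
    with q add_q smul_w smul_g w_q g_q
  rw [add_q, Pi.add_apply, smul_w, smul_g, Pi.smul_apply, Pi.smul_apply, w_q, g_q]
  apply Complex.ext <;> simp

include hw in
lemma norm_eq_one_of_coeFn (hW : ∫ q, q.2 ^ 2 ∂μ = 1) : ‖w‖ = 1 := by
  refine (pow_eq_one_iff_of_nonneg (norm_nonneg w) two_ne_zero).mp ?_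
  rw [← real_inner_self_eq_norm_sq, L2.inner_def, ← hW]
  refine integral_congr_ae ?_
  filter_upwards [hw] with q w_q
  rw [w_q, real_inner_self_eq_norm_sq, Complex.norm_real, norm_eq_abs, sq_abs]

include hw hg

lemma inner_sqrtOp_resolventOp_source (A r : ℝ) :
    ⟪sqrtOp hsupp (resolventOp hxmin hsupp hp (A • w + r • g)), w⟫
      = A * resolventMoment μ (fun q => q.2 ^ 2) 1 1 b σ := by
  rw [inner_sqrtOp_resolventOp, resolventMoment, resolventMoment, ← integral_const_mul]
  refine integral_congr_ae ?_
  filter_upwards [coeFn_smul_add_smul hw hg A r, hw] with q source_q w_q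
  rw [source_q, w_q, Complex.inner]
  simp
  ring

lemma resolventMoment_norm_source_sq (hψ : 0 ≤ ψ) (A : ℝ) (i j : ℕ) :
    resolventMoment μ (fun q => ‖(A • w + √ψ • g : Lp ℂ 2 μ) q‖ ^ 2) i j b σ
      = resolventMoment μ (sourceWeight ψ A) i j b σ := by
  refine integral_congr_ae ?_
  filter_upwards [coeFn_smul_add_smul hw hg A √ψ] with q source_q
  rw [source_q, Complex.sq_norm, Complex.normSq_mk, Real.mul_self_sqrt hψ, sourceWeight]
  ring

lemma isStationary_iff_resolventOp (hW : ∫ q, q.2 ^ 2 ∂μ = 1) (hψ : 0 ≤ ψ) {c₁ c₂ : ℝ}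
    (hc₂ : 0 ≤ c₂) {h : Lp ℂ 2 μ} (hh : h = -resolventOp hxmin hsupp hp (A • w + √ψ • g)) :
    IsStationary μ ψ c₁ c₂ A b σ ↔
      ⟪sqrtOp hsupp h, w⟫ = c₁ ∧ ‖perp w (sqrtOp hsupp h)‖ = c₂ := by
  have signal : ⟪sqrtOp hsupp h, w⟫ = -(A * resolventMoment μ (fun q => q.2 ^ 2) 1 1 b σ) := by
    rw [hh, map_neg, inner_neg_left, inner_sqrtOp_resolventOp_source hxmin hsupp hp hw hg]
  have energy : ⟪sqrtOp hsupp h, w⟫ ^ 2 + ‖perp w (sqrtOp hsupp h)‖ ^ 2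
      = resolventMoment μ (sourceWeight ψ A) 2 2 b σ := by
    rw [inner_sq_add_norm_perp_sq (norm_eq_one_of_coeFn hw hW), hh, map_neg, norm_neg,
      norm_sqrtOp_resolventOp_sq, resolventMoment_norm_source_sq hw hg hψ]
  rw [IsStationary, ← energy, neg_eq_iff_eq_neg, ← signal, eq_comm (a := c₁)]
  refine and_congr_right fun hc₁ => ?_
  rw [hc₁, add_right_inj, eq_comm, sq_eq_sq₀ (norm_nonneg _) hc₂]

lemma isNormalized_iff_norm_resolventOp (hψ : 0 ≤ ψ) {h : Lp ℂ 2 μ}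
    (hh : h = -resolventOp hxmin hsupp hp (A • w + √ψ • g)) :
    IsNormalized μ ψ A b σ ↔ ‖h‖ = 1 := by
  rw [IsNormalized, ← resolventMoment_norm_source_sq hw hg hψ,
    ← norm_resolventOp_sq hxmin hsupp hp, ← norm_neg, ← hh, eq_comm,
    pow_eq_one_iff_of_nonneg (norm_nonneg h) two_ne_zero]

include hxmin in
lemma sqrtOp_source_ne_zero [NeZero μ] (hψ : 0 < ψ) (A : ℝ) :
    sqrtOp hsupp (A • w + √ψ • g) ≠ 0 := by
  intro h
  obtain ⟨q, sqrt_q, zero_q, source_q, supp_q⟩ := ((coeFn_sqrtOp hsupp (A • w + √ψ • g)).and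
    ((Lp.coeFn_zero ℂ 2 μ).and ((coeFn_smul_add_smul hw hg A √ψ).and hsupp))).exists
  simp only [h, zero_q, source_q] at sqrt_q
  have imaginary := congrArg Complex.im sqrt_q
  simp only [Pi.zero_apply, Complex.zero_im, Complex.smul_im, smul_eq_mul] at imaginary
  exact (mul_pos (Real.sqrt_pos.mpr (hxmin.trans_le supp_q.1)) (Real.sqrt_pos.mpr hψ)).ne imaginary

end HilbertModel

section KarushKuhnTucker

/-- The three equations of the system for `p = (c₁, c₂, σ)` with `c₂, σ > 0`, where `σ = √ψ s`. -/
structure IsSolution (f : ℝ → ℝ) (μ : Measure (ℝ × ℝ)) (ψ κ : ℝ) (p : ℝ × ℝ × ℝ) : Prop where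
  radius_pos : 0 < p.2.1
  multiplier_pos : 0 < p.2.2
  isStationary : IsStationary μ ψ p.1 p.2.1 (signalCoeff f κ p.1 p.2.1) (radialCoeff f κ p.1 p.2.1)
    p.2.2
  isNormalized : IsNormalized μ ψ (signalCoeff f κ p.1 p.2.1) (radialCoeff f κ p.1 p.2.1) p.2.2

variable {f : ℝ → ℝ} {μ : Measure (ℝ × ℝ)} {xmin xmax κ ψ : ℝ}

/-- The gradient of the objective `J h = F_κ(⟪S h, w⟫, ‖S h - ⟪S h, w⟫ w‖) + √ψ ⟪S h, g⟫`, with `S`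
the multiplication by `X^{1/2}`. -/
def objectiveGradient (f : ℝ → ℝ) (κ ψ : ℝ) (hsupp : ∀ᵐ q ∂μ, q.1 ∈ Icc xmin xmax)
    (w g h : Lp ℂ 2 μ) : Lp ℂ 2 μ :=
  sqrtOp hsupp (cylGradient (d1F f κ) (d2F f κ) w (√ψ • g) (sqrtOp hsupp h))

variable (hf : Measurable f) (hf01 : ∀ x, f x ∈ Icc (0 : ℝ) 1) (hκ : 0 < κ)
  (hxmin : 0 < xmin) (hsupp : ∀ᵐ q ∂μ, q.1 ∈ Icc xmin xmax) {w g : Lp ℂ 2 μ}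

include hf hf01 hκ in
lemma isSubgradientSelection_objectiveGradient (hw : ‖w‖ = 1) :
    IsSubgradientSelection
      (fun h => cylFunctional (Fk f κ) w (√ψ • g) (sqrtOp hsupp h))
      (objectiveGradient f κ ψ hsupp w g) := by
  have := ((isSubgradientPair_Fk hf hf01 hκ).isSubgradientSelection_cylFunctional (d2F_zero f κ)
    (fun a _ => d2F_nonneg hf hf01 hκ a) hw (√ψ • g)).comp_clm (sqrtOp hsupp)
  rwa [sqrtOp, adjoint_mulLp] at this

include hf hf01 hκ in
lemma continuous_objectiveGradient : Continuous (objectiveGradient f κ ψ hsupp w g) :=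
  (sqrtOp hsupp).continuous.comp <| (continuous_cylGradient (continuous_d1F hf hf01 hκ)
    (continuous_d2F hf hf01 hκ) (d2F_zero f κ) _).comp (sqrtOp hsupp).continuous

lemma objectiveGradient_eq {h : Lp ℂ 2 μ} {c₁ c₂ : ℝ} (hc₁ : ⟪sqrtOp hsupp h, w⟫ = c₁)
    (hc₂ : ‖perp w (sqrtOp hsupp h)‖ = c₂) :
    objectiveGradient f κ ψ hsupp w g h = sqrtOp hsupp (radialCoeff f κ c₁ c₂ • sqrtOp hsupp h +
      (signalCoeff f κ c₁ c₂ • w + √ψ • g)) := by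
  rw [objectiveGradient, cylGradient, hc₁, hc₂, perp, hc₁, signalCoeff, radialCoeff]
  congr 1
  module

variable (hw : w =ᵐ[μ] fun q => (q.2 : ℂ)) (hg : g =ᵐ[μ] fun _ => Complex.I)
  (hW : ∫ q, q.2 ^ 2 ∂μ = 1)
include hf hf01 hκ hxmin hw hg

lemma mem_resolventPairs_of_kkt [NeZero μ] (hψ : 0 < ψ) {h : Lp ℂ 2 μ} {c₁ c₂ σ : ℝ}
    (hc₁ : ⟪sqrtOp hsupp h, w⟫ = c₁) (hc₂ : ‖perp w (sqrtOp hsupp h)‖ = c₂) (hσ : 0 ≤ σ)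
    (kkt : objectiveGradient f κ ψ hsupp w g h = -(σ • h)) :
    (radialCoeff f κ c₁ c₂, σ) ∈ resolventPairs := by
  have hb := radialCoeff_nonneg hf hf01 hκ c₁ (hc₂ ▸ norm_nonneg _)
  refine ⟨hb, hσ, (add_nonneg hb hσ).lt_of_ne' fun h0 => ?_⟩
  obtain ⟨b_zero, σ_zero⟩ := (add_eq_zero_iff_of_nonneg hb hσ).mp h0
  rw [objectiveGradient_eq hsupp hc₁ hc₂, b_zero, σ_zero, zero_smul, zero_smul, zero_add,
    neg_zero] at kkt
  exact sqrtOp_source_ne_zero hxmin hsupp hw hg hψ _ kkt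

include hW

include hsupp in
lemma exists_isSolution_of_signal_noise [IsProbabilityMeasure μ] (hψ : psiStar0 f < ψ) :
    ∃ p, IsSolution f μ ψ κ p := by
  have ψ_pos : 0 < ψ := (psiStar0_nonneg f).trans_lt hψ
  obtain ⟨h, σ, hσ, kkt, slack⟩ := (isSubgradientSelection_objectiveGradient (ψ := ψ) (g := g)
    hf hf01 hκ hsupp (norm_eq_one_of_coeFn hw hW)).exists_kkt_closedBall
      (continuous_objectiveGradient hf hf01 hκ hsupp)
  obtain ⟨c₁, hc₁⟩ : ∃ c₁, ⟪sqrtOp hsupp h, w⟫ = c₁ := ⟨_, rfl⟩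
  obtain ⟨c₂, hc₂⟩ : ∃ c₂, ‖perp w (sqrtOp hsupp h)‖ = c₂ := ⟨_, rfl⟩
  have c₂_nonneg : 0 ≤ c₂ := hc₂ ▸ norm_nonneg _
  have hp := mem_resolventPairs_of_kkt hf hf01 hκ hxmin hsupp hw hg ψ_pos hc₁ hc₂ hσ kkt
  rw [objectiveGradient_eq hsupp hc₁ hc₂] at kkt
  have h_eq := (sqrtOp_smul_add_eq_iff hxmin hsupp hp _ _).mp kkt
  have stationary := (isStationary_iff_resolventOp hxmin hsupp hp hw hg hW ψ_pos.le c₂_nonneg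
    h_eq).mpr ⟨hc₁, hc₂⟩
  have c₂_pos : 0 < c₂ :=
    c₂_nonneg.lt_of_ne' (stationary.ne_zero hW hxmin hsupp ψ_pos hp)
  have σ_ne : σ ≠ 0 := by
    rintro rfl
    exact not_isStationary_zero hf hf01 hW hxmin hsupp hκ hψ c₂_pos (by simpa using hp.2.2)
      stationary
  exact ⟨(c₁, c₂, σ), c₂_pos, hσ.lt_of_ne' σ_ne, stationary,
    (isNormalized_iff_norm_resolventOp hxmin hsupp hp hw hg ψ_pos.le h_eq).mpr
      (slack.resolve_left σ_ne)⟩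

lemma IsSolution.exists_kkt {p : ℝ × ℝ × ℝ} (hp : IsSolution f μ ψ κ p) (hψ : 0 ≤ ψ) :
    ∃ h : Lp ℂ 2 μ, objectiveGradient f κ ψ hsupp w g h = -(p.2.2 • h) ∧ ‖h‖ = 1 ∧
      ⟪sqrtOp hsupp h, w⟫ = p.1 ∧ ‖perp w (sqrtOp hsupp h)‖ = p.2.1 := by
  obtain ⟨c₂_pos, σ_pos, stationary, normalized⟩ := hp
  have hb := radialCoeff_nonneg hf hf01 hκ p.1 c₂_pos.le
  have admissible : (radialCoeff f κ p.1 p.2.1, p.2.2) ∈ resolventPairs :=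
    ⟨hb, σ_pos.le, add_pos_of_nonneg_of_pos hb σ_pos⟩
  have coordinates := (isStationary_iff_resolventOp hxmin hsupp admissible hw hg hW hψ c₂_pos.le
    rfl).mp stationary
  refine ⟨_, ?_, (isNormalized_iff_norm_resolventOp hxmin hsupp admissible hw hg hψ rfl).mp
    normalized, coordinates⟩
  rw [objectiveGradient_eq hsupp coordinates.1 coordinates.2]
  exact (sqrtOp_smul_add_eq_iff hxmin hsupp admissible _ _).mpr rfl

include hsupp in
lemma IsSolution.eq_of_signal_noise {p p' : ℝ × ℝ × ℝ} (hψ : 0 ≤ ψ)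
    (hp : IsSolution f μ ψ κ p) (hp' : IsSolution f μ ψ κ p') : p = p' := by
  obtain ⟨h, kkt, norm_h, hc₁, hc₂⟩ := hp.exists_kkt hf hf01 hκ hxmin hsupp hw hg hW hψ
  obtain ⟨h', kkt', norm_h', hc₁', hc₂'⟩ := hp'.exists_kkt hf hf01 hκ hxmin hsupp hw hg hW hψ
  obtain rfl : h = h' := (isSubgradientSelection_objectiveGradient hf hf01 hκ hsupp
    (norm_eq_one_of_coeFn hw hW)).kkt_unique hp.multiplier_pos hp'.multiplier_pos kkt kkt'
      norm_h norm_h'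
  have h_ne : h ≠ 0 := norm_ne_zero_iff.mp (norm_h ▸ one_ne_zero)
  have multiplier_eq := smul_left_injective ℝ h_ne (neg_injective (kkt.symm.trans kkt'))
  exact Prod.ext (hc₁.symm.trans hc₁') (Prod.ext (hc₂.symm.trans hc₂') multiplier_eq)

omit hf hf01 hκ hxmin hw hg in
lemma exists_signal_noise [IsFiniteMeasure μ] :
    ∃ w g : Lp ℂ 2 μ, w =ᵐ[μ] (fun q => (q.2 : ℂ)) ∧ g =ᵐ[μ] fun _ => Complex.I := by
  have signal : MemLp (fun q : ℝ × ℝ => (q.2 : ℂ)) 2 μ :=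
    ((memLp_two_iff_integrable_sq (Measurable.aestronglyMeasurable (by fun_prop))).mpr
      (integrable_snd_sq hW)).ofReal
  have noise : MemLp (fun _ : ℝ × ℝ => Complex.I) 2 μ := memLp_const _
  exact ⟨signal.toLp _, noise.toLp _, signal.coeFn_toLp, noise.coeFn_toLp⟩

omit hw hg in
include hsupp in
theorem existsUnique_isSolution [IsProbabilityMeasure μ] (hψ : psiStar0 f < ψ) :
    ∃! p, IsSolution f μ ψ κ p := by
  obtain ⟨w, g, hw, hg⟩ := exists_signal_noise hW
  obtain ⟨p, hp⟩ := exists_isSolution_of_signal_noise hf hf01 hκ hxmin hsupp hw hg hW hψ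
  exact ⟨p, hp, fun p' hp' => hp'.eq_of_signal_noise hf hf01 hκ hxmin hsupp hw hg hW
    ((psiStar0_nonneg f).trans hψ.le) hp⟩

end KarushKuhnTucker

section Continuity

variable {ι : Type*} {U : Ultrafilter ι}

lemma exists_tendsto_of_sq_le {u v : ι → ℝ} {L : ℝ} (hu : ∀ᶠ i in U, u i ^ 2 ≤ v i)
    (hv : Tendsto v U (𝓝 L)) : ∃ x, Tendsto u U (𝓝 x) := by
  have bounded : ∀ᶠ i in U, u i ∈ Icc (-√(L + 1)) √(L + 1) := by
    filter_upwards [hu, hv.eventually_le_const (lt_add_one L)] with i hi hL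
    exact abs_le.mp (Real.abs_le_sqrt (hi.trans hL))
  obtain ⟨x, -, hx⟩ := isCompact_Icc.ultrafilter_le_nhds' (U.map u) bounded
  exact ⟨x, hx⟩

lemma signalCoeff_eq (f : ℝ → ℝ) (κ c₁ c₂ : ℝ) :
    signalCoeff f κ c₁ c₂ = d1F f κ c₁ c₂ - c₁ * radialCoeff f κ c₁ c₂ := by
  rw [signalCoeff, radialCoeff, mul_assoc]

variable {f : ℝ → ℝ} (hf : Measurable f) (hf01 : ∀ x, f x ∈ Icc (0 : ℝ) 1)

section Coefficients

variable {κ c₁ c₂ b : ℝ} (hκ : 0 < κ) {κ' c₁' c₂' : ι → ℝ} (hκ' : Tendsto κ' U (𝓝 κ))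
  (hc₁ : Tendsto c₁' U (𝓝 c₁)) (hc₂ : Tendsto c₂' U (𝓝 c₂))
include hf hf01 hκ hκ' hc₁ hc₂

lemma tendsto_signalCoeff
    (hb : Tendsto (fun i => radialCoeff f (κ' i) (c₁' i) (c₂' i)) U (𝓝 b)) :
    Tendsto (fun i => signalCoeff f (κ' i) (c₁' i) (c₂' i)) U (𝓝 (d1F f κ c₁ c₂ - c₁ * b)) := by
  simp only [signalCoeff_eq]
  refine Tendsto.sub ?_ (hc₁.mul hb)
  simpa only [Function.comp_def] using
    (continuousAt_d1F hf hf01 hκ c₁ c₂).tendsto.comp (hκ'.prodMk_nhds (hc₁.prodMk_nhds hc₂))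

lemma tendsto_radialCoeff (hc₂_ne : c₂ ≠ 0) :
    Tendsto (fun i => radialCoeff f (κ' i) (c₁' i) (c₂' i)) U (𝓝 (radialCoeff f κ c₁ c₂)) := by
  refine (hc₂.inv₀ hc₂_ne).mul ?_
  simpa only [Function.comp_def] using
    (continuousAt_d2F hf hf01 hκ c₁ c₂).tendsto.comp (hκ'.prodMk_nhds (hc₁.prodMk_nhds hc₂))

lemma exists_tendsto_radialCoeff (hc₂_pos : ∀ᶠ i in U, 0 < c₂' i) :
    ∃ b, Tendsto (fun i => radialCoeff f (κ' i) (c₁' i) (c₂' i)) U (𝓝 b) := by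
  obtain ⟨C, hC⟩ := exists_Fk_mul_d2F_le hf hf01
  have Fk_tendsto : Tendsto (fun i => Fk f (κ' i) (c₁' i) (c₂' i)) U (𝓝 (Fk f κ c₁ c₂)) := by
    simpa only [Function.comp_def] using ((continuous_Fk hf hf01).tendsto (κ, c₁, c₂)).comp
      (hκ'.prodMk_nhds (hc₁.prodMk_nhds hc₂))
  refine exists_tendsto_of_sq_le ?_
    ((Fk_tendsto.inv₀ (Fk_pos hf hf01 hκ c₁ c₂).ne').const_mul C |>.pow 2)
  filter_upwards [hc₂_pos, hκ'.eventually_const_lt hκ] with i c₂_pos κ_pos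
  refine pow_le_pow_left₀ (radialCoeff_nonneg hf hf01 κ_pos _ c₂_pos.le) ?_ 2
  rw [← div_eq_mul_inv, le_div_iff₀ (Fk_pos hf hf01 κ_pos _ _), radialCoeff, mul_assoc,
    inv_mul_le_iff₀ c₂_pos, mul_comm (d2F _ _ _ _)]
  exact hC _ κ_pos _ _ c₂_pos.le

end Coefficients

variable {μ : Measure (ℝ × ℝ)} {xmin xmax κ ψ : ℝ}

include hf hf01 in
lemma IsSolution.mem_resolventPairs {p : ℝ × ℝ × ℝ} (hp : IsSolution f μ ψ κ p) (hκ : 0 < κ) :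
    (radialCoeff f κ p.1 p.2.1, p.2.2) ∈ resolventPairs :=
  have hb := radialCoeff_nonneg hf hf01 hκ p.1 hp.radius_pos.le
  ⟨hb, hp.multiplier_pos.le, add_pos_of_nonneg_of_pos hb hp.multiplier_pos⟩

variable [IsProbabilityMeasure μ] (hxmin : 0 < xmin) (hsupp : ∀ᵐ q ∂μ, q.1 ∈ Icc xmin xmax)
  (hW : ∫ q, q.2 ^ 2 ∂μ = 1)

section LimitsOfSolutions

variable (hκ : 0 < κ) (hψ : 0 < ψ) {ψ' κ' : ι → ℝ} {p' : ι → ℝ × ℝ × ℝ}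
  (hψ' : Tendsto ψ' U (𝓝 ψ)) (hκ' : Tendsto κ' U (𝓝 κ))
  (hp' : ∀ᶠ i in U, IsSolution f μ (ψ' i) (κ' i) (p' i))
include hf hf01 hκ hκ' hp'

omit [IsProbabilityMeasure μ] in
lemma eventually_mem_resolventPairs : ∀ᶠ i in U,
    (radialCoeff f (κ' i) (p' i).1 (p' i).2.1, (p' i).2.2) ∈ resolventPairs := by
  filter_upwards [hp', hκ'.eventually_const_lt hκ] with i hi κ_pos
  exact hi.mem_resolventPairs hf hf01 κ_pos

include hxmin hsupp hW hψ hψ'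

lemma exists_tendsto_fst_snd :
    ∃ c₁ c₂, Tendsto (fun i => (p' i).1) U (𝓝 c₁) ∧ Tendsto (fun i => (p' i).2.1) U (𝓝 c₂) := by
  have energy_le : ∀ᶠ i in U, (p' i).1 ^ 2 + (p' i).2.1 ^ 2 ≤ xmax := by
    filter_upwards [hp', hψ'.eventually_const_lt hψ,
      eventually_mem_resolventPairs hf hf01 hκ hκ' hp'] with i hi ψ_pos admissible
    exact hi.isNormalized.add_sq_le hW hxmin hsupp hi.isStationary ψ_pos.le admissible
  obtain ⟨c₁, hc₁⟩ := exists_tendsto_of_sq_le (u := fun i => (p' i).1)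
    (energy_le.mono fun i hi => by linarith [sq_nonneg (p' i).2.1]) tendsto_const_nhds
  obtain ⟨c₂, hc₂⟩ := exists_tendsto_of_sq_le (u := fun i => (p' i).2.1)
    (energy_le.mono fun i hi => by linarith [sq_nonneg (p' i).1]) tendsto_const_nhds
  exact ⟨c₁, c₂, hc₁, hc₂⟩

lemma exists_tendsto_multiplier {A : ℝ}
    (hA : Tendsto (fun i => signalCoeff f (κ' i) (p' i).1 (p' i).2.1) U (𝓝 A)) :
    ∃ σ, Tendsto (fun i => (p' i).2.2) U (𝓝 σ) := by
  refine exists_tendsto_of_sq_le ?_ ((hψ'.add (hA.pow 2)).mul_const xmax)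
  filter_upwards [hp', hψ'.eventually_const_lt hψ,
    eventually_mem_resolventPairs hf hf01 hκ hκ' hp'] with i hi ψ_pos admissible
  exact hi.isNormalized.sq_le hW hxmin hsupp ψ_pos.le admissible.1 hi.multiplier_pos

lemma mem_resolventPairs_of_tendsto {b σ : ℝ}
    (hb : Tendsto (fun i => radialCoeff f (κ' i) (p' i).1 (p' i).2.1) U (𝓝 b))
    (hσ : Tendsto (fun i => (p' i).2.2) U (𝓝 σ)) : (b, σ) ∈ resolventPairs := by
  have admissible' := eventually_mem_resolventPairs hf hf01 hκ hκ' hp'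
  have b_nonneg : 0 ≤ b := ge_of_tendsto hb (admissible'.mono fun i hi => hi.1)
  have σ_nonneg : 0 ≤ σ := ge_of_tendsto hσ (admissible'.mono fun i hi => hi.2.1)
  refine ⟨b_nonneg, σ_nonneg, (add_nonneg b_nonneg σ_nonneg).lt_of_ne' fun h0 => ?_⟩
  have lower : ψ * xmin ≤ (b * xmax + σ) ^ 2 := by
    refine le_of_tendsto_of_tendsto (hψ'.mul_const xmin) (((hb.mul_const xmax).add hσ).pow 2) ?_
    filter_upwards [hp', hψ'.eventually_const_lt hψ, admissible'] with i hi ψ_pos admissible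
    exact hi.isNormalized.mul_le_sq hW hxmin hsupp ψ_pos.le admissible
  obtain ⟨rfl, rfl⟩ := (add_eq_zero_iff_of_nonneg b_nonneg σ_nonneg).mp h0
  linarith [mul_pos hψ hxmin]

omit hψ in
lemma isSolution_of_tendsto (hψ : psiStar0 f < ψ) {c₁ c₂ b σ : ℝ}
    (hc₁ : Tendsto (fun i => (p' i).1) U (𝓝 c₁)) (hc₂ : Tendsto (fun i => (p' i).2.1) U (𝓝 c₂))
    (hb : Tendsto (fun i => radialCoeff f (κ' i) (p' i).1 (p' i).2.1) U (𝓝 b))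
    (hσ : Tendsto (fun i => (p' i).2.2) U (𝓝 σ)) (hp : (b, σ) ∈ resolventPairs) :
    IsSolution f μ ψ κ (c₁, c₂, σ) := by
  have ψ_pos : 0 < ψ := (psiStar0_nonneg f).trans_lt hψ
  have admissible' := eventually_mem_resolventPairs hf hf01 hκ hκ' hp'
  have hA := tendsto_signalCoeff hf hf01 hκ hκ' hc₁ hc₂ hb
  have stationary := IsStationary.of_tendsto hW hxmin hsupp hA hb hσ hψ' hp admissible' hc₁ hc₂
    (hp'.mono fun i hi => hi.isStationary)
  have normalized := IsNormalized.of_tendsto hW hxmin hsupp hA hb hσ hψ' hp admissible'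
    (hp'.mono fun i hi => hi.isNormalized)
  have c₂_nonneg : 0 ≤ c₂ := ge_of_tendsto hc₂ (hp'.mono fun i hi => hi.radius_pos.le)
  have c₂_pos : 0 < c₂ := c₂_nonneg.lt_of_ne' (stationary.ne_zero hW hxmin hsupp ψ_pos hp)
  obtain rfl : b = radialCoeff f κ c₁ c₂ :=
    tendsto_nhds_unique hb (tendsto_radialCoeff hf hf01 hκ hκ' hc₁ hc₂ c₂_pos.ne')
  rw [← signalCoeff_eq] at stationary normalized
  refine ⟨c₂_pos, hp.2.1.lt_of_ne' ?_, stationary, normalized⟩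
  rintro rfl
  exact not_isStationary_zero hf hf01 hW hxmin hsupp hκ hψ c₂_pos (by simpa using hp.2.2)
    stationary

omit hψ in
theorem exists_isSolution_and_tendsto (hψ : psiStar0 f < ψ) :
    ∃ p, IsSolution f μ ψ κ p ∧ Tendsto p' U (𝓝 p) := by
  have ψ_pos : 0 < ψ := (psiStar0_nonneg f).trans_lt hψ
  obtain ⟨c₁, c₂, hc₁, hc₂⟩ :=
    exists_tendsto_fst_snd hf hf01 hxmin hsupp hW hκ ψ_pos hψ' hκ' hp'
  obtain ⟨b, hb⟩ := exists_tendsto_radialCoeff hf hf01 hκ hκ' hc₁ hc₂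
    (hp'.mono fun i hi => hi.radius_pos)
  obtain ⟨σ, hσ⟩ := exists_tendsto_multiplier hf hf01 hxmin hsupp hW hκ ψ_pos hψ' hκ' hp'
    (tendsto_signalCoeff hf hf01 hκ hκ' hc₁ hc₂ hb)
  exact ⟨(c₁, c₂, σ), isSolution_of_tendsto hf hf01 hxmin hsupp hW hκ hψ' hκ' hp' hψ hc₁ hc₂ hb hσ
    (mem_resolventPairs_of_tendsto hf hf01 hxmin hsupp hW hκ ψ_pos hψ' hκ' hp' hb hσ),
    hc₁.prodMk_nhds (hc₂.prodMk_nhds hσ)⟩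

end LimitsOfSolutions

include hf hf01 hxmin hsupp hW in
theorem continuousOn_of_forall_isSolution {p : ℝ × ℝ → ℝ × ℝ × ℝ} {D : Set (ℝ × ℝ)}
    (hD : ∀ q ∈ D, 0 < q.2 ∧ psiStar0 f < q.1) (hp : ∀ q ∈ D, IsSolution f μ q.1 q.2 (p q)) :
    ContinuousOn p D := by
  intro q hq
  refine tendsto_iff_ultrafilter _ _ _ |>.mpr fun U hU => ?_
  have q_tendsto : Tendsto id U (𝓝 q) := hU.trans nhdsWithin_le_nhds
  have solves : ∀ᶠ q' in U, IsSolution f μ q'.1 q'.2 (p q') :=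
    hU (eventually_nhdsWithin_of_forall hp)
  obtain ⟨limit, hlimit, p_tendsto⟩ := exists_isSolution_and_tendsto hf hf01 hxmin hsupp hW
    (hD q hq).1 q_tendsto.fst_nhds q_tendsto.snd_nhds solves (hD q hq).2
  rwa [(existsUnique_isSolution hf hf01 (hD q hq).1 hxmin hsupp hW (hD q hq).2).unique
    (hp q hq) hlimit]

end Continuity

section OriginalVariables

variable {f : ℝ → ℝ} {μ : Measure (ℝ × ℝ)} {xmin xmax : ℝ}

lemma isSolution_iff_solSysMu (hxmin : 0 < xmin) (hsupp : ∀ᵐ q ∂μ, q.1 ∈ Icc xmin xmax)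
    {ψ κ c₁ c₂ s : ℝ} (hψ : 0 < ψ) :
    IsSolution f μ ψ κ (c₁, c₂, √ψ * s) ↔ 0 < c₂ ∧ 0 < s ∧ SolSysMu f μ ψ κ c₁ c₂ s := by
  rw [solSysMu_iff hxmin hsupp, ← mul_pos_iff_of_pos_left (b := s) (Real.sqrt_pos.mpr hψ)]
  exact ⟨fun h => ⟨h.radius_pos, h.multiplier_pos, h.isStationary, h.isNormalized⟩,
    fun h => ⟨h.1, h.2.1, h.2.2.1, h.2.2.2⟩⟩

lemma continuousOn_Tval (hf : Measurable f) (hf01 : ∀ x, f x ∈ Icc (0 : ℝ) 1)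
    {sol : ℝ × ℝ → ℝ × ℝ × ℝ} {D : Set (ℝ × ℝ)} (hD : ∀ q ∈ D, 0 < q.1 ∧ 0 < q.2)
    (hsol : ContinuousOn sol D) :
    ContinuousOn (fun q => Tval f q.1 q.2 (sol q).1 (sol q).2.1 (sol q).2.2) D := by
  intro q hq
  have hc₁ := (hsol q hq).fst
  have hc₂ := (hsol q hq).snd.fst
  have arguments : ContinuousWithinAt (fun q => (q.2, (sol q).1, (sol q).2.1)) D q :=
    continuousWithinAt_snd.prodMk (hc₁.prodMk hc₂)
  have value : ContinuousWithinAt (fun q => Fk f q.2 (sol q).1 (sol q).2.1) D q := by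
    simpa only [ContinuousWithinAt, Function.comp_def] using
      ((continuous_Fk hf hf01).tendsto _).comp arguments
  have slope₁ : ContinuousWithinAt (fun q => d1F f q.2 (sol q).1 (sol q).2.1) D q := by
    simpa only [ContinuousWithinAt, Function.comp_def] using
      (continuousAt_d1F hf hf01 (hD q hq).2 _ _).tendsto.comp arguments
  have slope₂ : ContinuousWithinAt (fun q => d2F f q.2 (sol q).1 (sol q).2.1) D q := by
    simpa only [ContinuousWithinAt, Function.comp_def] using
      (continuousAt_d2F hf hf01 (hD q hq).2 _ _).tendsto.comp arguments
  have scale : ContinuousWithinAt (fun q : ℝ × ℝ => (√q.1)⁻¹) D q :=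
    continuousWithinAt_fst.sqrt.inv₀ (Real.sqrt_pos.mpr (hD q hq).1).ne'
  exact (scale.mul ((value.sub (hc₁.mul slope₁)).sub (hc₂.mul slope₂))).sub (hsol q hq).snd.snd

end OriginalVariables

theorem statement_7_general (f : ℝ → ℝ) (hf : Measurable f) (hf01 : ∀ x, f x ∈ Icc (0 : ℝ) 1)
    (μ : Measure (ℝ × ℝ)) [IsProbabilityMeasure μ] (xmin xmax : ℝ) (hxmin : 0 < xmin)
    (hsupp : ∀ᵐ q ∂μ, q.1 ∈ Icc xmin xmax) (hW : ∫ q, q.2 ^ 2 ∂μ = 1) :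
    ∃ sol : ℝ × ℝ → ℝ × ℝ × ℝ,
      (∀ ψ κ : ℝ, 0 < κ → psiStar0 f < ψ →
        (0 < (sol (ψ, κ)).2.1 ∧ 0 < (sol (ψ, κ)).2.2
          ∧ SolSysMu f μ ψ κ (sol (ψ, κ)).1 (sol (ψ, κ)).2.1 (sol (ψ, κ)).2.2
          ∧ ∀ c₁ c₂ s : ℝ, 0 < c₂ → 0 < s → SolSysMu f μ ψ κ c₁ c₂ s → (c₁, c₂, s) = sol (ψ, κ)))
      ∧ ContinuousOn sol {q | 0 < q.2 ∧ psiStar0 f < q.1}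
      ∧ ContinuousOn (fun q => Tval f q.1 q.2 (sol q).1 (sol q).2.1 (sol q).2.2)
          {q | 0 < q.2 ∧ psiStar0 f < q.1} := by
  have unique_solution (q : ℝ × ℝ) (hq : 0 < q.2 ∧ psiStar0 f < q.1) :=
    existsUnique_isSolution hf hf01 hq.1 hxmin hsupp hW hq.2
  choose! p hp p_unique using unique_solution
  have ψ_pos (q : ℝ × ℝ) (hq : 0 < q.2 ∧ psiStar0 f < q.1) : 0 < q.1 :=
    (psiStar0_nonneg f).trans_lt hq.2
  have p_continuous : ContinuousOn p {q | 0 < q.2 ∧ psiStar0 f < q.1} :=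
    continuousOn_of_forall_isSolution hf hf01 hxmin hsupp hW (fun _ hq => hq) hp
  have sol_continuous : ContinuousOn (fun q => ((p q).1, (p q).2.1, (p q).2.2 / √q.1))
      {q | 0 < q.2 ∧ psiStar0 f < q.1} :=
    p_continuous.fst.prodMk <| p_continuous.snd.fst.prodMk <| p_continuous.snd.snd.div
      continuousOn_fst.sqrt fun q hq => (Real.sqrt_pos.mpr (ψ_pos q hq)).ne'
  refine ⟨_, fun ψ κ hκ hψ => ?_, sol_continuous, continuousOn_Tval hf hf01
    (fun q hq => ⟨ψ_pos q hq, hq.1⟩) sol_continuous⟩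
  have sqrt_ne : √ψ ≠ 0 := (Real.sqrt_pos.mpr (ψ_pos (ψ, κ) ⟨hκ, hψ⟩)).ne'
  have solves : IsSolution f μ ψ κ ((p (ψ, κ)).1, (p (ψ, κ)).2.1, √ψ * ((p (ψ, κ)).2.2 / √ψ)) := by
    rw [mul_div_cancel₀ _ sqrt_ne]
    exact hp (ψ, κ) ⟨hκ, hψ⟩
  have iff {c₁ c₂ s : ℝ} := isSolution_iff_solSysMu (f := f) (κ := κ) (c₁ := c₁) (c₂ := c₂)
    (s := s) hxmin hsupp (ψ_pos (ψ, κ) ⟨hκ, hψ⟩)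
  obtain ⟨c₂_pos, s_pos, system⟩ := iff.mp solves
  refine ⟨c₂_pos, s_pos, system, fun c₁ c₂ s hc₂ hs h => ?_⟩
  have := p_unique (ψ, κ) ⟨hκ, hψ⟩ _ (iff.mpr ⟨hc₂, hs, h⟩)
  simp only [← this, mul_div_cancel_left₀ s sqrt_ne]

/-- For every `ψ > ψ↓(κ)` the system of equations has a unique solution
`(c₁(ψ,κ), c₂(ψ,κ), s(ψ,κ)) ∈ ℝ × (0,∞) × (0,∞)`; moreover the functions `T, c₁, c₂, s` are
continuous on the domain `{(ψ,κ) : κ > 0, ψ > ψ↓(κ)}`. -/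
theorem statement_7 (f : ℝ → ℝ) (hf : Continuous f) (hf01 : ∀ x, f x ∈ Set.Icc (0:ℝ) 1)
    (ρ : ℝ) (hρ : 0 < ρ) (hnd : NonDeg (fun x => f (ρ * x)))
    (μ : Measure (ℝ × ℝ)) [IsProbabilityMeasure μ]
    (xmin xmax : ℝ) (hxmin : 0 < xmin) (hxx : xmin ≤ xmax)
    (hsupp : ∀ᵐ q ∂μ, q.1 ∈ Set.Icc xmin xmax)
    (hw2 : ∫ q, q.2 ^ 2 ∂μ = 1) :
    ∃ sol : ℝ × ℝ → ℝ × ℝ × ℝ,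
      (∀ ψ κ : ℝ, 0 < κ → psiDown (fun x => f (ρ * x)) μ κ < ψ →
        (0 < (sol (ψ, κ)).2.1 ∧ 0 < (sol (ψ, κ)).2.2
          ∧ SolSysMu (fun x => f (ρ * x)) μ ψ κ
              (sol (ψ, κ)).1 (sol (ψ, κ)).2.1 (sol (ψ, κ)).2.2
          ∧ ∀ c₁ c₂ s : ℝ, 0 < c₂ → 0 < s →
              SolSysMu (fun x => f (ρ * x)) μ ψ κ c₁ c₂ s → (c₁, c₂, s) = sol (ψ, κ)))
      ∧ ContinuousOn (fun q : ℝ × ℝ => (sol q).1)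
          {q : ℝ × ℝ | 0 < q.2 ∧ psiDown (fun x => f (ρ * x)) μ q.2 < q.1}
      ∧ ContinuousOn (fun q : ℝ × ℝ => (sol q).2.1)
          {q : ℝ × ℝ | 0 < q.2 ∧ psiDown (fun x => f (ρ * x)) μ q.2 < q.1}
      ∧ ContinuousOn (fun q : ℝ × ℝ => (sol q).2.2)
          {q : ℝ × ℝ | 0 < q.2 ∧ psiDown (fun x => f (ρ * x)) μ q.2 < q.1}
      ∧ ContinuousOn (fun q : ℝ × ℝ =>
            Tval (fun x => f (ρ * x)) q.1 q.2 (sol q).1 (sol q).2.1 (sol q).2.2)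
          {q : ℝ × ℝ | 0 < q.2 ∧ psiDown (fun x => f (ρ * x)) μ q.2 < q.1} := by
  obtain ⟨sol, solves, sol_continuous, Tval_continuous⟩ := statement_7_general
    (fun x => f (ρ * x)) (by fun_prop) (fun x => hf01 _) μ xmin xmax hxmin hsupp hw2
  have psiStar0_le (κ : ℝ) : psiStar0 (fun x => f (ρ * x)) ≤ psiDown (fun x => f (ρ * x)) μ κ :=
    (le_max_left _ _).trans (le_max_left _ _)
  have domain_subset : {q : ℝ × ℝ | 0 < q.2 ∧ psiDown (fun x => f (ρ * x)) μ q.2 < q.1} ⊆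
      {q | 0 < q.2 ∧ psiStar0 (fun x => f (ρ * x)) < q.1} :=
    fun q hq => ⟨hq.1, (psiStar0_le q.2).trans_lt hq.2⟩
  have := sol_continuous.mono domain_subset
  exact ⟨sol, fun ψ κ hκ hψ => solves ψ κ hκ ((psiStar0_le κ).trans_lt hψ),
    this.fst, this.snd.fst, this.snd.snd, Tval_continuous.mono domain_subset⟩

end MaxMargin
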